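/- arXiv:2410.11003 — 2 statements merged into one kernel-verified Lean document; each statement's English description precedes it below -/
import Mathlib

section
/- Let m ≥ 1, s ≥ 2 and 1 ≤ t ≤ s be integers and r = ms + t, and let ε, ν ∈ (0, 1/2). There is a constant C = C(ν) such that the following holds for p = C·n^{−2/s}·(log n)^{2/(s(s−1))}. Let G be an n-vertex graph and X ⊆ V(G) with |X| ≤ εn, and assume that for every x ∈ X and every Y ⊆ V(G)\{x} with |Y| ≤ 2rεn, the number of copies of B_{m,s,t} in G that avoid Y and contain x in the class of size t is at least ν·n^{ms+t−1}. Then with high probability (as n → ∞) the graph G ∪ G_{n,p} contains a family {F̃_x : x ∈ X} of pairwise vertex-disjoint copies of K_r such that for each x ∈ X, F̃_x contains a copy of B_{m,s,t} all of whose edges lie in G and which contains x in a class of size t; in particular, X is covered by a partial K_r-factor. -/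
open Finset
open scoped Classical

/-- The degree of a vertex (number of neighbours). -/
noncomputable def degR {V : Type*} (G : SimpleGraph V) (v : V) : ℕ :=
  Nat.card (G.neighborSet v)

/-- The number of edges of a graph on `Fin n`. -/
noncomputable def edgeCount {n : ℕ} (H : SimpleGraph (Fin n)) : ℕ := Nat.card H.edgeSet

/-- The probability that the binomial random graph `G_{n,p}` satisfies the property `P`. -/
noncomputable def Pr (n : ℕ) (p : ℝ) (P : SimpleGraph (Fin n) → Prop) : ℝ :=
  ∑ H : SimpleGraph (Fin n),
    if P H then p ^ edgeCount H * (1 - p) ^ (n.choose 2 - edgeCount H) else 0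

/-- `G` has a `K_r`-factor: a partition of the vertex set into `r`-cliques. -/
def HasCliqueFactor {n : ℕ} (G : SimpleGraph (Fin n)) (r : ℕ) : Prop :=
  ∃ P : Finpartition (Finset.univ : Finset (Fin n)), ∀ c ∈ P.parts, G.IsNClique r c

/-- The threshold function `p_s(n)`: `log n / n` if `s = 2` and `n^{-φ(s)}` with
`φ(s) = 2s/((s-1)(s+2))` if `s ≥ 3`. -/
noncomputable def pThr (s n : ℕ) : ℝ :=
  if s = 2 then Real.log n / n
  else (n : ℝ) ^ (-(2 * (s : ℝ)) / (((s : ℝ) - 1) * ((s : ℝ) + 2)))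

/-- The number of edges of `G` within the vertex set `S`. -/
noncomputable def edgesIn {V : Type*} (G : SimpleGraph V) (S : Set V) : ℕ :=
  Nat.card {e : Sym2 V // e ∈ G.edgeSet ∧ ∀ v ∈ e, v ∈ S}

/-- The number of ordered adjacent pairs between `S` and `T`. -/
noncomputable def edgesBtw {V : Type*} (G : SimpleGraph V) (S T : Set V) : ℕ :=
  Nat.card {p : V × V // p.1 ∈ S ∧ p.2 ∈ T ∧ G.Adj p.1 p.2}

/-- The edge density of the pair `(S, T)` in `G`. -/
noncomputable def density {V : Type*} (G : SimpleGraph V) (S T : Set V) : ℝ :=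
  (edgesBtw G S T : ℝ) / ((S.ncard : ℝ) * (T.ncard : ℝ))

/-- The pair `(S, T)` is `(ε, d)`-regular in `G`. -/
def IsRegularPair {V : Type*} (G : SimpleGraph V) (S T : Set V) (ε d : ℝ) : Prop :=
  ∀ X ⊆ S, ∀ Y ⊆ T, ε * S.ncard ≤ (X.ncard : ℝ) → ε * T.ncard ≤ (Y.ncard : ℝ) →
    |density G X Y - d| < ε

/-- The pair `(S, T)` is `(ε, d, ϑ)`-super-regular in `G`. -/
def IsSuperRegularPair {V : Type*} (G : SimpleGraph V) (S T : Set V) (ε d ϑ : ℝ) : Prop :=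
  IsRegularPair G S T ε d ∧
  (∀ v ∈ S, ϑ * T.ncard ≤ ((T ∩ G.neighborSet v).ncard : ℝ)) ∧
  (∀ v ∈ T, ϑ * S.ncard ≤ ((S ∩ G.neighborSet v).ncard : ℝ))

/-- The classes `A 0, …, A (m-1)` (each of size `s`) and `B` (of size `t`) form a copy of the
complete `(m+1)`-partite graph `B_{m,s,t}` in `G`. -/
def IsBCopy {V : Type*} (G : SimpleGraph V) (m s t : ℕ)
    (A : Fin m → Finset V) (B : Finset V) : Prop :=
  (∀ i, (A i).card = s) ∧ B.card = t ∧
  (Pairwise fun i j => Disjoint (A i) (A j)) ∧ (∀ i, Disjoint (A i) B) ∧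
  (∀ i j, i ≠ j → ∀ x ∈ A i, ∀ y ∈ A j, G.Adj x y) ∧
  (∀ i, ∀ x ∈ A i, ∀ y ∈ B, G.Adj x y)

/-!
By Haxell's theorem on disjoint systems of hyperedges, the required cliques exist as soon as for all
nonempty `S ⊆ X` and all `Y` with `|Y| = O(|S|)` some copy of `B_{m,s,t}` in `G`, rooted in `S` and
avoiding `X ∪ Y` away from its root, has all pairs inside its classes in the random graph. There are
at least `|S| ν n^{ms+t-1}` candidate copies, and `n^d p^{d(d-1)/2} ≥ C n log n` for `2 ≤ d ≤ s`, so
by Janson's inequality none of them survives with probability at most `n^{-2(|S|+|Y|)}`. The sum of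
these probabilities over all pairs `(S, Y)` tends to `0`.
-/

/-! ### Haxell's theorem -/

section Haxell

variable {ι V : Type*} {E : ι → Set (Finset V)} {D S S' X : Finset ι} {W W' e : Finset V}
  {f f' f'' : ι → Finset V} {a : ι} {d : ℕ}

/-- A system of disjoint representatives of the families `E i`, `i ∈ D`: the sets `f i ∈ E i` are
pairwise disjoint. The values of `f` outside `D` are irrelevant. -/
structure IsDisjointSystem (E : ι → Set (Finset V)) (D : Finset ι) (f : ι → Finset V) : Prop where
  mem : ∀ i ∈ D, f i ∈ E i
  pairwiseDisjoint : (D : Set ι).PairwiseDisjoint f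

lemma IsDisjointSystem.update [DecidableEq ι] (hf : IsDisjointSystem E D f) (he : e ∈ E a)
    (hdisj : ∀ i ∈ D, i ≠ a → Disjoint e (f i)) :
    IsDisjointSystem E (insert a D) (Function.update f a e) where
  mem i hi := by
    rcases eq_or_ne i a with rfl | hia
    · rwa [Function.update_self]
    · rw [Function.update_of_ne hia]
      exact hf.mem i ((mem_insert.mp hi).resolve_left hia)
  pairwiseDisjoint := by
    rw [coe_insert, Set.pairwiseDisjoint_insert, Function.update_self]
    constructor
    · intro i hi j hj hij
      rcases eq_or_ne i a with rfl | hia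
      · simpa [Function.onFun, Function.update_of_ne hij.symm] using hdisj j hj hij.symm
      rcases eq_or_ne j a with rfl | hja
      · simpa [Function.onFun, Function.update_of_ne hia] using (hdisj i hi hia).symm
      · simpa [Function.onFun, Function.update_of_ne hia, Function.update_of_ne hja]
          using hf.pairwiseDisjoint hi hj hij
    · intro i hi hai
      rw [Function.update_of_ne hai.symm]
      exact hdisj i hi hai.symm

/-- `f'` arises from `f` on `D` by replacing some of the sets, none of them indexed by `S`, by sets
that avoid `W`. -/
def IsRearrangement (D S : Finset ι) (W : Finset V) (f f' : ι → Finset V) : Prop :=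
  ∀ i ∈ D, f' i = f i ∨ i ∉ S ∧ Disjoint (f' i) W

lemma IsRearrangement.refl : IsRearrangement D S W f f := fun _ _ => Or.inl rfl

lemma IsRearrangement.trans (h : IsRearrangement D S W f f') (h' : IsRearrangement D S W f' f'') :
    IsRearrangement D S W f f'' := fun i hi =>
  (h' i hi).elim (fun heq => heq ▸ h i hi) Or.inr

lemma IsRearrangement.anti (hS : S ⊆ S') (hW : W ⊆ W') (h : IsRearrangement D S' W' f f') :
    IsRearrangement D S W f f' := fun i hi =>
  (h i hi).imp_right fun ⟨hiS, hd⟩ => ⟨fun hi => hiS (hS hi), hd.mono_right hW⟩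

lemma IsRearrangement.subset (h : IsRearrangement D S W f f') (hf : ∀ i ∈ D, i ∈ S → f i ⊆ W) :
    ∀ i ∈ D, i ∈ S → f' i ⊆ W := fun i hi hiS =>
  (h i hi).elim (fun heq => heq ▸ hf i hi hiS) fun h => absurd hiS h.1

/-- Some rearrangement of `f` leaves room for a further set `e ∈ E a`, `a ∈ S`, that also
avoids `W`. -/
def IsAugmentable (E : ι → Set (Finset V)) (D S : Finset ι) (W : Finset V) (f : ι → Finset V) :
    Prop :=
  ∃ f', IsDisjointSystem E D f' ∧ IsRearrangement D S W f f' ∧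
    ∃ a ∈ S, ∃ e ∈ E a, Disjoint e W ∧ ∀ i ∈ D, Disjoint e (f' i)

lemma IsAugmentable.of_isRearrangement (h : IsRearrangement D S W f f')
    (h' : IsAugmentable E D S W f') : IsAugmentable E D S W f :=
  let ⟨f'', hf'', hr, hext⟩ := h'
  ⟨f'', hf'', h.trans hr, hext⟩

/-- The indices in `D` whose set under `f` meets `e`. -/
def conflicts [DecidableEq V] (D : Finset ι) (f : ι → Finset V) (e : Finset V) : Finset ι :=
  {i ∈ D | ¬ Disjoint e (f i)}

lemma mem_conflicts [DecidableEq V] {i : ι} :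
    i ∈ conflicts D f e ↔ i ∈ D ∧ ¬ Disjoint e (f i) := mem_filter

lemma disjoint_conflicts [DecidableEq V] (hf : ∀ i ∈ D, i ∈ S → f i ⊆ W) (he : Disjoint e W) :
    Disjoint S (conflicts D f e) := by
  rw [disjoint_right]
  intro i hi hiS
  obtain ⟨hiD, hmeets⟩ := mem_conflicts.mp hi
  exact hmeets (he.mono_right (hf i hiD hiS))

lemma card_union_biUnion_conflicts_le [DecidableEq V] (hcard : ∀ i ∈ D, #(f i) ≤ d)
    (he : #e ≤ d) (hne : (conflicts D f e).Nonempty) :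
    #(e ∪ (conflicts D f e).biUnion f) ≤ (2 * d - 1) * #(conflicts D f e) := by
  set M := conflicts D f e
  have hsdiff : ∀ i ∈ M, #(f i \ e) ≤ d - 1 ∧ 1 ≤ d := fun i hi => by
    obtain ⟨hiD, hmeets⟩ := mem_conflicts.mp hi
    have hinter : 0 < #(e ∩ f i) :=
      card_pos.mpr (nonempty_iff_ne_empty.mpr (mt disjoint_iff_inter_eq_empty.mpr hmeets))
    have := card_sdiff_add_card_inter (f i) e
    have := hcard i hiD
    rw [inter_comm] at hinter
    omega
  have hd : 1 ≤ d := (hsdiff _ hne.choose_spec).2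
  have hunion : e ∪ M.biUnion f = e ∪ M.biUnion fun i => f i \ e := by
    ext v
    simp only [mem_union, mem_biUnion, mem_sdiff]
    grind
  calc #(e ∪ M.biUnion f) ≤ #e + #(M.biUnion fun i => f i \ e) := hunion ▸ card_union_le _ _
    _ ≤ d + #M * (d - 1) :=
      add_le_add he (card_biUnion_le_card_mul _ _ _ fun i hi => (hsdiff i hi).1)
    _ ≤ #M * d + #M * (d - 1) := by gcongr; exact Nat.le_mul_of_pos_left d hne.card_pos
    _ = (2 * d - 1) * #M := by rw [← mul_add, mul_comm]; congr 1; omega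

lemma card_union_le_of_conflicts [DecidableEq ι] [DecidableEq V] (hcard : ∀ i ∈ D, #(f i) ≤ d)
    (he : #e ≤ d) (hne : (conflicts D f e).Nonempty) (hSM : Disjoint S (conflicts D f e))
    (hSne : S.Nonempty) (hW : #W ≤ (2 * d - 1) * (#S - 1)) :
    #(W ∪ (e ∪ (conflicts D f e).biUnion f)) ≤ (2 * d - 1) * (#(S ∪ conflicts D f e) - 1) :=
  calc #(W ∪ (e ∪ (conflicts D f e).biUnion f))
      ≤ #W + #(e ∪ (conflicts D f e).biUnion f) := card_union_le _ _
    _ ≤ (2 * d - 1) * (#S - 1) + (2 * d - 1) * #(conflicts D f e) :=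
      add_le_add hW (card_union_biUnion_conflicts_le hcard he hne)
    _ = (2 * d - 1) * (#(S ∪ conflicts D f e) - 1) := by
      rw [card_union_of_disjoint hSM, ← mul_add]
      have := hSne.card_pos
      congr 1
      omega

-- The augmenting set of the larger problem either solves the smaller one or takes over an index in
-- conflict with `e`, which removes that conflict.
lemma IsAugmentable.or_exists_conflicts_ssubset [DecidableEq ι] [DecidableEq V]
    (h : IsAugmentable E D (S ∪ conflicts D f e) (W ∪ (e ∪ (conflicts D f e).biUnion f)) f) :
    IsAugmentable E D S W f ∨ ∃ g, IsDisjointSystem E D g ∧ IsRearrangement D S W f g ∧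
      conflicts D g e ⊂ conflicts D f e := by
  set W' := W ∪ (e ∪ (conflicts D f e).biUnion f)
  have hWW' : W ⊆ W' := subset_union_left
  have heW' : e ⊆ W' := subset_union_left.trans subset_union_right
  obtain ⟨f', hf', hrearr, a, ha, e', he', he'W', hdisj⟩ := h
  have hrearr' : IsRearrangement D S W f f' := hrearr.anti subset_union_left hWW'
  by_cases haS : a ∈ S
  · exact Or.inl ⟨f', hf', hrearr', a, haS, e', he', he'W'.mono_right hWW', hdisj⟩
  have haM : a ∈ conflicts D f e := (mem_union.mp ha).resolve_left haS
  have haD : a ∈ D := (mem_conflicts.mp haM).1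
  refine Or.inr ⟨Function.update f' a e', ?_, fun i hi => ?_, ?_⟩
  · simpa [insert_eq_of_mem haD] using hf'.update he' fun i hi _ => hdisj i hi
  · rcases eq_or_ne i a with rfl | hia
    · rw [Function.update_self]
      exact Or.inr ⟨haS, he'W'.mono_right hWW'⟩
    · rw [Function.update_of_ne hia]
      exact hrearr' i hi
  · refine lt_of_le_of_lt (fun i hi => ?_) (erase_ssubset haM)
    obtain ⟨hiD, hmeets⟩ := mem_conflicts.mp hi
    rcases eq_or_ne i a with rfl | hia
    · rw [Function.update_self] at hmeets
      exact absurd (he'W'.mono_right heW').symm hmeets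
    · rw [Function.update_of_ne hia] at hmeets
      rcases hrearr i hiD with heq | ⟨-, hiW'⟩
      · exact mem_erase.mpr ⟨hia, mem_conflicts.mpr ⟨hiD, heq ▸ hmeets⟩⟩
      · exact absurd (hiW'.mono_right heW').symm hmeets

-- Induction on `#(X \ S)`; for a rearrangement with the fewest conflicts with a set found by `hE`,
-- the induction hypothesis for `S` enlarged by the conflicting indices cannot remove any of them.
theorem isAugmentable_of_forall_exists_disjoint (hcard : ∀ i ∈ X, ∀ e ∈ E i, #e ≤ d)
    (hE : ∀ S ⊆ X, S.Nonempty → ∀ W : Finset V, #W ≤ (2 * d - 1) * (#S - 1) →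
      ∃ i ∈ S, ∃ e ∈ E i, Disjoint e W)
    (hD : D ⊆ X) (hS : S ⊆ X) (hSne : S.Nonempty) (hW : #W ≤ (2 * d - 1) * (#S - 1))
    (hf : IsDisjointSystem E D f) (hfW : ∀ i ∈ D, i ∈ S → f i ⊆ W) :
    IsAugmentable E D S W f := by
  induction hN : #(X \ S) using Nat.strong_induction_on generalizing S W f with
  | _ N ih =>
  obtain ⟨a, haS, e, hea, heW⟩ := hE S hS hSne W hW
  obtain ⟨g, ⟨hg, hfg⟩, hmin⟩ := exists_minimalFor_of_wellFoundedLT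
    (fun g => IsDisjointSystem E D g ∧ IsRearrangement D S W f g) (fun g => #(conflicts D g e))
    ⟨f, hf, .refl⟩
  refine .of_isRearrangement hfg ?_
  have hgW := hfg.subset hfW
  rcases (conflicts D g e).eq_empty_or_nonempty with hempty | hne
  · refine ⟨g, hg, .refl, a, haS, e, hea, heW, fun i hi => ?_⟩
    by_contra hmeets
    exact notMem_empty i (hempty ▸ mem_conflicts.mpr ⟨hi, hmeets⟩)
  have hSM := disjoint_conflicts hgW heW
  have hMX : conflicts D g e ⊆ X := fun i hi => hD (mem_conflicts.mp hi).1
  have hlarger : IsAugmentable E D (S ∪ conflicts D g e)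
      (W ∪ (e ∪ (conflicts D g e).biUnion g)) g := by
    refine ih _ ?_ (union_subset hS hMX) (hSne.mono subset_union_left) ?_ hg ?_ rfl
    · obtain ⟨j, hj⟩ := hne
      rw [← hN]
      refine card_lt_card (ssubset_iff_of_subset (sdiff_subset_sdiff le_rfl subset_union_left)
        |>.mpr ⟨j, mem_sdiff.mpr ⟨hMX hj, disjoint_right.mp hSM hj⟩, ?_⟩)
      simp [hj]
    · exact card_union_le_of_conflicts (fun i hi => hcard i (hD hi) _ (hg.mem i hi))
        (hcard a (hS haS) e hea) hne hSM hSne hW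
    · intro i hi hiSM
      rcases mem_union.mp hiSM with hiS | hiM
      · exact (hgW i hi hiS).trans subset_union_left
      · exact (subset_biUnion_of_mem g hiM).trans (subset_union_right.trans subset_union_right)
  refine hlarger.or_exists_conflicts_ssubset.resolve_right fun ⟨g', hg', hgg', hlt⟩ => ?_
  exact (card_lt_card hlt).not_ge (hmin ⟨hg', hfg.trans hgg'⟩ (card_le_card hlt.subset))

theorem haxell (hcard : ∀ i ∈ X, ∀ e ∈ E i, #e ≤ d)
    (hE : ∀ S ⊆ X, S.Nonempty → ∀ W : Finset V, #W ≤ (2 * d - 1) * (#S - 1) →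
      ∃ i ∈ S, ∃ e ∈ E i, Disjoint e W) :
    ∃ f, IsDisjointSystem E X f := by
  suffices ∀ D ⊆ X, ∃ f, IsDisjointSystem E D f from this X subset_rfl
  intro D
  induction D using Finset.induction_on with
  | empty => exact fun _ => ⟨fun _ => ∅, by simp, by simp⟩
  | insert a D haD ih =>
    intro hD
    obtain ⟨f, hf⟩ := ih ((subset_insert a D).trans hD)
    have haug : IsAugmentable E D {a} ∅ f :=
      isAugmentable_of_forall_exists_disjoint hcard hE ((subset_insert a D).trans hD)
        (singleton_subset_iff.mpr (hD (mem_insert_self a D))) (singleton_nonempty a) (by simp) hf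
        fun i hi hia => absurd (mem_singleton.mp hia ▸ hi) haD
    obtain ⟨f', hf', -, b, hb, e, heb, -, hdisj⟩ := haug
    obtain rfl := mem_singleton.mp hb
    exact ⟨_, hf'.update heb fun i hi _ => hdisj i hi⟩

end Haxell

/-! ### Binomial random subsets -/

section BinomialSubset

variable {α ι : Type*} {Ω : Finset α} {p : ℝ} {f g : Finset α → ℝ} {P Q : Finset α → Prop}

/-- The expectation of `f H` for the random subset `H` of `Ω` that contains each element of `Ω`
independently with probability `p`. -/
noncomputable def binomialExpect (Ω : Finset α) (p : ℝ) (f : Finset α → ℝ) : ℝ :=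
  ∑ H ∈ Ω.powerset, p ^ #H * (1 - p) ^ (#Ω - #H) * f H

/-- The probability that the random subset of `Ω` that contains each element of `Ω` independently
with probability `p` has the property `P`. -/
noncomputable def binomialProb (Ω : Finset α) (p : ℝ) (P : Finset α → Prop) : ℝ :=
  binomialExpect Ω p fun H => if P H then 1 else 0

lemma binomialExpect_congr (h : ∀ H ⊆ Ω, f H = g H) :
    binomialExpect Ω p f = binomialExpect Ω p g :=
  sum_congr rfl fun H hH => by rw [h H (mem_powerset.mp hH)]

lemma binomialExpect_mono (hp0 : 0 ≤ p) (hp1 : p ≤ 1) (h : ∀ H ⊆ Ω, f H ≤ g H) :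
    binomialExpect Ω p f ≤ binomialExpect Ω p g := by
  refine sum_le_sum fun H hH => mul_le_mul_of_nonneg_left (h H (mem_powerset.mp hH)) ?_
  have := sub_nonneg.mpr hp1
  positivity

lemma binomialExpect_one : binomialExpect Ω p (fun _ => 1) = 1 := by
  simp only [binomialExpect, mul_one, sum_pow_mul_eq_add_pow, add_sub_cancel, one_pow]

lemma binomialExpect_sub :
    binomialExpect Ω p (fun H => f H - g H) = binomialExpect Ω p f - binomialExpect Ω p g := by
  simp only [binomialExpect, mul_sub, sum_sub_distrib]

lemma binomialExpect_const_mul (c : ℝ) :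
    binomialExpect Ω p (fun H => c * f H) = c * binomialExpect Ω p f := by
  simp only [binomialExpect, mul_sum, mul_left_comm]

lemma binomialExpect_sum (I : Finset ι) (F : ι → Finset α → ℝ) :
    binomialExpect Ω p (fun H => ∑ i ∈ I, F i H) = ∑ i ∈ I, binomialExpect Ω p (F i) := by
  simp only [binomialExpect, mul_sum]
  exact sum_comm

lemma binomialExpect_nonneg (hp0 : 0 ≤ p) (hp1 : p ≤ 1) (h : ∀ H ⊆ Ω, 0 ≤ f H) :
    0 ≤ binomialExpect Ω p f := by
  simpa [binomialExpect] using binomialExpect_mono (f := fun _ => 0) hp0 hp1 h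

lemma binomialExpect_ite_mem [DecidableEq α] {e : α} (he : e ∈ Ω) :
    binomialExpect Ω p (fun H => if e ∈ H then f H else 0) =
      p * binomialExpect Ω p fun H => f (insert e H) := by
  obtain ⟨Ω', he', rfl⟩ : ∃ Ω', e ∉ Ω' ∧ Ω = insert e Ω' :=
    ⟨Ω.erase e, notMem_erase e Ω, (insert_erase he).symm⟩
  simp only [binomialExpect, sum_powerset_insert he', ← sum_add_distrib, mul_sum]
  refine sum_congr rfl fun H hH => ?_
  have hHΩ := mem_powerset.mp hH
  have heH : e ∉ H := fun h => he' (hHΩ h)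
  have hcard := card_le_card hHΩ
  rw [card_insert_of_notMem he', card_insert_of_notMem heH, Nat.sub_add_comm hcard,
    Nat.add_sub_add_right, insert_idem, if_neg heH, if_pos (mem_insert_self e H)]
  ring

lemma binomialExpect_ite_subset [DecidableEq α] {T : Finset α} (hT : T ⊆ Ω) :
    binomialExpect Ω p (fun H => if T ⊆ H then f H else 0) =
      p ^ #T * binomialExpect Ω p fun H => f (H ∪ T) := by
  induction T using Finset.induction_on generalizing f with
  | empty => simp
  | insert e T he ih =>
    calc binomialExpect Ω p (fun H => if insert e T ⊆ H then f H else 0)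
        = binomialExpect Ω p (fun H => if e ∈ H then if T ⊆ H then f H else 0 else 0) := by
          simp only [insert_subset_iff, ite_and]
      _ = p * binomialExpect Ω p (fun H => if T ⊆ H then f (insert e H) else 0) := by
          rw [binomialExpect_ite_mem (hT (mem_insert_self e T))]
          simp only [subset_insert_iff_of_notMem he]
      _ = p ^ #(insert e T) * binomialExpect Ω p (fun H => f (H ∪ insert e T)) := by
          rw [ih ((subset_insert e T).trans hT), card_insert_of_notMem he]
          simp only [union_insert]
          ring

lemma binomialProb_mono (hp0 : 0 ≤ p) (hp1 : p ≤ 1) (h : ∀ H ⊆ Ω, P H → Q H) :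
    binomialProb Ω p P ≤ binomialProb Ω p Q := by
  refine binomialExpect_mono hp0 hp1 fun H hH => ?_
  split_ifs with hP hQ hQ
  exacts [le_rfl, absurd (h H hH hP) hQ, zero_le_one, le_rfl]

lemma binomialProb_le_one (hp0 : 0 ≤ p) (hp1 : p ≤ 1) : binomialProb Ω p P ≤ 1 :=
  (binomialExpect_mono hp0 hp1 fun H _ => by split_ifs <;> simp).trans_eq
    (binomialExpect_one (Ω := Ω) (p := p))

lemma binomialProb_not : binomialProb Ω p (fun H => ¬ P H) = 1 - binomialProb Ω p P := by
  rw [← binomialExpect_one (Ω := Ω) (p := p), binomialProb, binomialProb, ← binomialExpect_sub]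
  refine binomialExpect_congr fun H _ => ?_
  split_ifs <;> simp

lemma binomialProb_exists_le (hp0 : 0 ≤ p) (hp1 : p ≤ 1) (I : Finset ι)
    (R : ι → Finset α → Prop) :
    binomialProb Ω p (fun H => ∃ i ∈ I, R i H) ≤ ∑ i ∈ I, binomialProb Ω p (R i) := by
  simp only [binomialProb]
  rw [← binomialExpect_sum]
  refine binomialExpect_mono hp0 hp1 fun H _ => ?_
  have hnonneg : ∀ i ∈ I, (0 : ℝ) ≤ if R i H then 1 else 0 := fun i _ => by split_ifs <;> simp
  split_ifs with h
  · obtain ⟨i, hi, hR⟩ := h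
    simpa [hR] using single_le_sum hnonneg hi
  · exact sum_nonneg hnonneg

end BinomialSubset

/-! ### Janson's inequality -/

section Janson

variable {α ι : Type*} [DecidableEq α] {Ω H H' T : Finset α} {p q D : ℝ} {E : ι → Finset α}
  {I J : Finset ι} {φ : Finset α → ℝ} {a : ι}

/-- The number of indices `i ∈ I` with `E i ⊆ H`. -/
def containedCount (E : ι → Finset α) (I : Finset ι) (H : Finset α) : ℕ := #{i ∈ I | E i ⊆ H}

/-- The summand of the Janson sum that belongs to the pair `A`, `B`: the probability that the random
set contains both of them, unless these two events are independent. -/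
noncomputable def overlapWeight (p : ℝ) (A B : Finset α) : ℝ :=
  if Disjoint A B then 0 else p ^ #(A ∪ B)

/-- The Janson sum of the family `E i`, `i ∈ I`. It runs over ordered pairs and includes the
diagonal. -/
noncomputable def overlapSum (p : ℝ) (E : ι → Finset α) (I : Finset ι) : ℝ :=
  ∑ i ∈ I, ∑ j ∈ I, overlapWeight p (E i) (E j)

lemma containedCount_mono (h : H ⊆ H') : containedCount E I H ≤ containedCount E I H' :=
  card_le_card (monotone_filter_right I fun _ _ hi => hi.trans h)

lemma containedCount_insert [DecidableEq ι] (ha : a ∉ I) :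
    containedCount E (insert a I) H = containedCount E I H + if E a ⊆ H then 1 else 0 := by
  rw [containedCount, filter_insert]
  split_ifs
  · exact card_insert_of_notMem fun h => ha (mem_filter.mp h).1
  · rfl

lemma containedCount_filter_add_filter_not (P : ι → Prop) [DecidablePred P] :
    containedCount E {i ∈ I | P i} H + containedCount E {i ∈ I | ¬ P i} H =
      containedCount E I H := by
  simp only [containedCount]
  rw [← card_filter_add_card_filter_not (s := {i ∈ I | E i ⊆ H}) P]
  simp only [filter_filter, and_comm]

lemma containedCount_union (hT : ∀ i ∈ I, Disjoint (E i) T) :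
    containedCount E I (H ∪ T) = containedCount E I H := by
  refine congrArg card (filter_congr fun i hi => ⟨fun h => ?_, fun h => h.trans subset_union_left⟩)
  exact (hT i hi).left_le_of_le_sup_right h

lemma overlapWeight_nonneg (hp : 0 ≤ p) (A B : Finset α) : 0 ≤ overlapWeight p A B := by
  rw [overlapWeight]
  positivity

lemma overlapWeight_comm (A B : Finset α) : overlapWeight p A B = overlapWeight p B A := by
  simp only [overlapWeight, disjoint_comm, union_comm]

lemma overlapSum_add_le_insert [DecidableEq ι] (hp : 0 ≤ p) (ha : a ∉ I) :
    overlapSum p E I + 2 * ∑ j ∈ I, overlapWeight p (E a) (E j) ≤ overlapSum p E (insert a I) := by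
  have hsymm : ∑ i ∈ I, overlapWeight p (E i) (E a) = ∑ j ∈ I, overlapWeight p (E a) (E j) :=
    sum_congr rfl fun i _ => overlapWeight_comm _ _
  have hdiag := overlapWeight_nonneg hp (E a) (E a)
  simp only [overlapSum, sum_insert ha, sum_add_distrib, hsymm]
  linarith

lemma sum_pow_card_le_overlapSum (hp : 0 ≤ p) (hE : ∀ i ∈ I, (E i).Nonempty) :
    ∑ i ∈ I, p ^ #(E i) ≤ overlapSum p E I := by
  refine sum_le_sum fun i hi => ?_
  have hself : overlapWeight p (E i) (E i) = p ^ #(E i) := by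
    rw [overlapWeight, union_self, if_neg]
    exact mt (disjoint_self_iff_empty _).mp (hE i hi).ne_empty
  exact hself ▸ single_le_sum (f := fun j => overlapWeight p (E i) (E j))
    (fun j _ => overlapWeight_nonneg hp _ _) hi

lemma binomialExpect_ite_subset_mul_containedCount_le (hp0 : 0 ≤ p) (hp1 : p ≤ 1) (hφ : Antitone φ)
    (hT : T ⊆ Ω) (hE : ∀ j ∈ J, E j ⊆ Ω) :
    binomialExpect Ω p (fun H => if T ⊆ H then φ H * containedCount E J H else 0) ≤
      (∑ j ∈ J, p ^ #(T ∪ E j)) * binomialExpect Ω p φ := by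
  calc binomialExpect Ω p (fun H => if T ⊆ H then φ H * containedCount E J H else 0)
      = ∑ j ∈ J, binomialExpect Ω p (fun H => if T ∪ E j ⊆ H then φ H else 0) := by
        rw [← binomialExpect_sum]
        refine binomialExpect_congr fun H _ => ?_
        simp only [union_subset_iff, ite_and]
        split_ifs <;> simp [containedCount, mul_comm, sum_ite]
    _ = ∑ j ∈ J, p ^ #(T ∪ E j) * binomialExpect Ω p (fun H => φ (H ∪ (T ∪ E j))) :=
        sum_congr rfl fun j hj => binomialExpect_ite_subset (union_subset hT (hE j hj))
    _ ≤ (∑ j ∈ J, p ^ #(T ∪ E j)) * binomialExpect Ω p φ := by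
        rw [sum_mul]
        gcongr
        exact binomialExpect_mono hp0 hp1 fun H _ => hφ subset_union_left

lemma sub_mul_binomialExpect_le_of_antitone (hp0 : 0 ≤ p) (hp1 : p ≤ 1) (hq0 : 0 ≤ q) (hq1 : q ≤ 1)
    (hφ : Antitone φ) (hφ0 : ∀ H, 0 ≤ φ H) (hφT : ∀ H, φ (H ∪ T) = φ H) (hT : T ⊆ Ω)
    (hE : ∀ j ∈ J, E j ⊆ Ω) :
    (p ^ #T - q * ∑ j ∈ J, p ^ #(T ∪ E j)) * binomialExpect Ω p φ ≤
      binomialExpect Ω p (fun H => if T ⊆ H then φ H * (1 - q) ^ containedCount E J H else 0) := by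
  have hbernoulli (H : Finset α) :
      φ H - q * (φ H * containedCount E J H) ≤ φ H * (1 - q) ^ containedCount E J H := by
    have := one_add_mul_le_pow (show -2 ≤ -q by linarith) (containedCount E J H)
    rw [← sub_eq_add_neg] at this
    nlinarith [hφ0 H]
  calc (p ^ #T - q * ∑ j ∈ J, p ^ #(T ∪ E j)) * binomialExpect Ω p φ
      = binomialExpect Ω p (fun H => if T ⊆ H then φ H else 0) -
          q * ((∑ j ∈ J, p ^ #(T ∪ E j)) * binomialExpect Ω p φ) := by
        rw [binomialExpect_ite_subset hT]
        simp only [hφT]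
        ring
    _ ≤ binomialExpect Ω p (fun H => if T ⊆ H then φ H else 0) -
          q * binomialExpect Ω p (fun H => if T ⊆ H then φ H * containedCount E J H else 0) := by
        gcongr
        exact binomialExpect_ite_subset_mul_containedCount_le hp0 hp1 hφ hT hE
    _ ≤ _ := by
        rw [← binomialExpect_const_mul, ← binomialExpect_sub]
        refine binomialExpect_mono hp0 hp1 fun H _ => ?_
        split_ifs
        exacts [hbernoulli H, by simp]

-- The sets `E i` disjoint from `T` are independent of the event `T ⊆ H`; only the others cost.
lemma sub_mul_binomialExpect_pow_containedCount_le (hp0 : 0 ≤ p) (hp1 : p ≤ 1) (hq0 : 0 ≤ q)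
    (hq1 : q ≤ 1) (hT : T ⊆ Ω) (hE : ∀ i ∈ I, E i ⊆ Ω) :
    (p ^ #T - q * ∑ j ∈ I, overlapWeight p T (E j)) *
        binomialExpect Ω p (fun H => (1 - q) ^ containedCount E I H) ≤
      binomialExpect Ω p (fun H => if T ⊆ H then (1 - q) ^ containedCount E I H else 0) := by
  have hq : 0 ≤ 1 - q := sub_nonneg.mpr hq1
  have hq' : 1 - q ≤ 1 := sub_le_self 1 hq0
  set K := {i ∈ I | Disjoint T (E i)}
  set J := {i ∈ I | ¬ Disjoint T (E i)}
  set φ : Finset α → ℝ := fun H => (1 - q) ^ containedCount E K H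
  have hsum : ∑ j ∈ I, overlapWeight p T (E j) = ∑ j ∈ J, p ^ #(T ∪ E j) := by
    simp only [overlapWeight, sum_ite, sum_const_zero, zero_add, J]
  have hsplit (H : Finset α) :
      (1 - q) ^ containedCount E I H = φ H * (1 - q) ^ containedCount E J H := by
    rw [← pow_add, containedCount_filter_add_filter_not]
  rcases le_total (p ^ #T - q * ∑ j ∈ I, overlapWeight p T (E j)) 0 with hneg | hpos
  · refine (mul_nonpos_of_nonpos_of_nonneg hneg ?_).trans ?_ <;>
      exact binomialExpect_nonneg hp0 hp1 fun H _ => by positivity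
  calc _ ≤ (p ^ #T - q * ∑ j ∈ I, overlapWeight p T (E j)) * binomialExpect Ω p φ := by
        gcongr
        refine binomialExpect_mono hp0 hp1 fun H _ => ?_
        exact (hsplit H).trans_le (mul_le_of_le_one_right (by positivity) (pow_le_one₀ hq hq'))
    _ ≤ binomialExpect Ω p
          (fun H => if T ⊆ H then φ H * (1 - q) ^ containedCount E J H else 0) := by
        rw [hsum]
        refine sub_mul_binomialExpect_le_of_antitone hp0 hp1 hq0 hq1 ?_ (fun H => by positivity) ?_
          hT fun j hj => hE j (filter_subset _ _ hj)
        · exact fun H H' h => pow_le_pow_of_le_one hq hq' (containedCount_mono h)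
        · exact fun H => congrArg ((1 - q) ^ ·)
            (containedCount_union fun i hi => (mem_filter.mp hi).2.symm)
    _ = _ := by simp only [hsplit]

theorem binomialExpect_pow_containedCount_le (hp0 : 0 ≤ p) (hp1 : p ≤ 1) (hq0 : 0 ≤ q) (hq1 : q ≤ 1)
    (hE : ∀ i ∈ I, E i ⊆ Ω) :
    binomialExpect Ω p (fun H => (1 - q) ^ containedCount E I H) ≤
      Real.exp (-(q * ∑ i ∈ I, p ^ #(E i)) + q ^ 2 / 2 * overlapSum p E I) := by
  classical
  induction I using Finset.induction_on with
  | empty => simp [containedCount, overlapSum, binomialExpect_one]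
  | insert a I ha ih =>
    set M := binomialExpect Ω p fun H => (1 - q) ^ containedCount E I H
    set S := ∑ j ∈ I, overlapWeight p (E a) (E j)
    have hM : 0 ≤ M :=
      binomialExpect_nonneg hp0 hp1 fun H _ => pow_nonneg (sub_nonneg.mpr hq1) _
    have hrec : binomialExpect Ω p (fun H => (1 - q) ^ containedCount E (insert a I) H) =
        M - q * binomialExpect Ω p
          (fun H => if E a ⊆ H then (1 - q) ^ containedCount E I H else 0) := by
      rw [← binomialExpect_const_mul, ← binomialExpect_sub]
      refine binomialExpect_congr fun H _ => ?_
      rw [containedCount_insert ha]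
      split_ifs <;> ring
    have hstep := sub_mul_binomialExpect_pow_containedCount_le hp0 hp1 hq0 hq1
      (hE a (mem_insert_self a I)) fun i hi => hE i (mem_insert_of_mem hi)
    calc _ ≤ (-(q * p ^ #(E a)) + q ^ 2 * S + 1) * M := by
          rw [hrec]
          nlinarith [mul_le_mul_of_nonneg_left hstep hq0]
      _ ≤ Real.exp (-(q * p ^ #(E a)) + q ^ 2 * S) *
            Real.exp (-(q * ∑ i ∈ I, p ^ #(E i)) + q ^ 2 / 2 * overlapSum p E I) := by
          gcongr
          · exact Real.add_one_le_exp _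
          · exact ih fun i hi => hE i (mem_insert_of_mem hi)
      _ ≤ _ := by
          rw [← Real.exp_add, Real.exp_le_exp, sum_insert ha]
          nlinarith [mul_le_mul_of_nonneg_left (overlapSum_add_le_insert (E := E) hp0 ha)
            (sq_nonneg q)]

theorem janson_inequality (hp0 : 0 ≤ p) (hp1 : p ≤ 1) (hE : ∀ i ∈ I, E i ⊆ Ω)
    (hD : overlapSum p E I ≤ D) :
    binomialProb Ω p (fun H => ∀ i ∈ I, ¬ E i ⊆ H) ≤
      Real.exp (-((∑ i ∈ I, p ^ #(E i)) ^ 2 / (2 * D))) := by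
  by_cases hne : ∀ i ∈ I, (E i).Nonempty
  swap
  · push Not at hne
    obtain ⟨i, hi, hempty⟩ := hne
    have himpossible (H : Finset α) : ¬ ∀ i ∈ I, ¬ E i ⊆ H := fun h => h i hi (by simp [hempty])
    simpa only [binomialProb, if_neg (himpossible _), binomialExpect, mul_zero, sum_const_zero]
      using (Real.exp_pos _).le
  set μ := ∑ i ∈ I, p ^ #(E i)
  have hμ0 : 0 ≤ μ := sum_nonneg fun i _ => by positivity
  have hμD : μ ≤ D := (sum_pow_card_le_overlapSum hp0 hne).trans hD
  rcases (hμ0.trans hμD).eq_or_lt with rfl | hDpos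
  · simpa using binomialProb_le_one hp0 hp1
  have hq1 : μ / D ≤ 1 := div_le_one_of_le₀ hμD hDpos.le
  calc _ ≤ binomialExpect Ω p (fun H => (1 - μ / D) ^ containedCount E I H) := by
        refine binomialExpect_mono hp0 hp1 fun H _ => ?_
        split_ifs with h
        · simp [containedCount, filter_false_of_mem h]
        · exact pow_nonneg (sub_nonneg.mpr hq1) _
    _ ≤ Real.exp (-(μ / D * μ) + (μ / D) ^ 2 / 2 * overlapSum p E I) :=
        binomialExpect_pow_containedCount_le hp0 hp1 (by positivity) hq1 hE
    _ ≤ Real.exp (-(μ / D * μ) + (μ / D) ^ 2 / 2 * D) := by gcongr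
    _ = Real.exp (-(μ ^ 2 / (2 * D))) := by
        congr 1
        field_simp
        ring

end Janson

/-! ### Overlaps of class families -/

section ClassFamilies

variable {V κ : Type*} [DecidableEq V]

/-- The pairs of distinct elements of `U`. -/
def innerPairs (U : Finset V) : Finset (Sym2 V) := {e ∈ U.sym2 | ¬ e.IsDiag}

lemma mk_mem_innerPairs {U : Finset V} {x y : V} :
    s(x, y) ∈ innerPairs U ↔ x ∈ U ∧ y ∈ U ∧ x ≠ y := by
  simp only [innerPairs, mem_filter, mk_mem_sym2_iff, Sym2.mk_isDiag_iff, and_assoc, ne_eq]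

lemma card_innerPairs (U : Finset V) : #(innerPairs U) = (#U).choose 2 := by
  rw [← Sym2.card_image_offDiag U]
  congr 1
  ext ⟨x, y⟩
  rw [mk_mem_innerPairs]
  simp only [mem_image, mem_offDiag, Prod.exists, Function.uncurry_apply_pair, Sym2.eq_iff]
  grind

lemma innerPairs_mono {U U' : Finset V} (h : U ⊆ U') : innerPairs U ⊆ innerPairs U' :=
  filter_subset_filter _ (sym2_mono h)

lemma innerPairs_inter (U U' : Finset V) :
    innerPairs (U ∩ U') = innerPairs U ∩ innerPairs U' := by
  ext ⟨x, y⟩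
  simp only [mk_mem_innerPairs, mem_inter]
  tauto

variable [Fintype κ] {c c' : κ → Finset V} {s e : ℕ} {N p R : ℝ}

/-- The vertex set of a multipartite graph with vertex classes `c`. -/
def classUnion (c : κ → Finset V) : Finset V := univ.biUnion c

/-- The pairs of vertices inside the classes `c`: those missing in the complete multipartite graph
with vertex classes `c`. -/
def classEdges (c : κ → Finset V) : Finset (Sym2 V) := univ.biUnion fun a => innerPairs (c a)

lemma card_classUnion (hc : Pairwise (Function.onFun Disjoint c)) :
    #(classUnion c) = ∑ a, #(c a) :=
  card_biUnion fun _ _ _ _ hab => hc hab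

lemma card_classEdges (hc : Pairwise (Function.onFun Disjoint c)) :
    #(classEdges c) = ∑ a, (#(c a)).choose 2 := by
  simp only [classEdges, ← card_innerPairs]
  refine card_biUnion fun a _ b _ hab => ?_
  simp only [Function.onFun, disjoint_iff_inter_eq_empty, ← innerPairs_inter,
    disjoint_iff_inter_eq_empty.mp (hc hab)]
  rfl

lemma classEdges_subset_innerPairs_univ [Fintype V] : classEdges c ⊆ innerPairs univ :=
  biUnion_subset.mpr fun a _ => innerPairs_mono (subset_univ (c a))

lemma card_classUnion_inter (hc : Pairwise (Function.onFun Disjoint c))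
    (hc' : Pairwise (Function.onFun Disjoint c')) :
    #(classUnion c ∩ classUnion c') = ∑ ab : κ × κ, #(c ab.1 ∩ c' ab.2) := by
  have hunion : classUnion c ∩ classUnion c' =
      (univ : Finset (κ × κ)).biUnion fun ab => c ab.1 ∩ c' ab.2 := by
    ext x
    simp [classUnion]
  rw [hunion, card_biUnion]
  intro a _ b _ hab
  by_cases h : a.1 = b.1
  · exact (hc' fun h' => hab (Prod.ext h h')).mono inter_subset_right inter_subset_right
  · exact (hc h).mono inter_subset_left inter_subset_left

lemma classEdges_inter : classEdges c ∩ classEdges c' =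
    (univ : Finset (κ × κ)).biUnion fun ab => innerPairs (c ab.1 ∩ c' ab.2) := by
  ext x
  simp [classEdges, innerPairs_inter]

lemma card_classEdges_inter_le :
    #(classEdges c ∩ classEdges c') ≤ ∑ ab : κ × κ, (#(c ab.1 ∩ c' ab.2)).choose 2 := by
  simp only [classEdges_inter, ← card_innerPairs]
  exact card_biUnion_le

lemma exists_two_le_card_inter_of_not_disjoint_classEdges
    (h : ¬ Disjoint (classEdges c) (classEdges c')) :
    ∃ ab : κ × κ, 2 ≤ #(c ab.1 ∩ c' ab.2) := by
  contrapose! h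
  have hempty (ab : κ × κ) : innerPairs (c ab.1 ∩ c' ab.2) = ∅ := by
    rw [← card_eq_zero, card_innerPairs, Nat.choose_eq_zero_of_lt (h ab)]
  rw [disjoint_iff_inter_eq_empty, classEdges_inter, eq_empty_iff_forall_notMem]
  simp [hempty]

lemma le_pow_card_classUnion_inter_mul (hc : Pairwise (Function.onFun Disjoint c))
    (hc' : Pairwise (Function.onFun Disjoint c')) (hcs : ∀ a, #(c a) ≤ s) (hN : 1 ≤ N)
    (hp0 : 0 < p) (hp1 : p ≤ 1) (hR : 1 ≤ R)
    (hdense : ∀ d, 2 ≤ d → d ≤ s → R ≤ N ^ d * p ^ d.choose 2)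
    (hmeet : ¬ Disjoint (classEdges c) (classEdges c')) :
    R ≤ N ^ #(classUnion c ∩ classUnion c') * p ^ #(classEdges c ∩ classEdges c') := by
  set F : κ × κ → ℝ := fun ab => N ^ #(c ab.1 ∩ c' ab.2) * p ^ (#(c ab.1 ∩ c' ab.2)).choose 2
  have hds (ab : κ × κ) : #(c ab.1 ∩ c' ab.2) ≤ s :=
    (card_le_card inter_subset_left).trans (hcs _)
  have hone (ab : κ × κ) : 1 ≤ F ab := by
    rcases lt_or_ge #(c ab.1 ∩ c' ab.2) 2 with hlt | hge
    · simp only [F, Nat.choose_eq_zero_of_lt hlt, pow_zero, mul_one]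
      exact one_le_pow₀ hN
    · exact hR.trans (hdense _ hge (hds ab))
  obtain ⟨ab, hab⟩ := exists_two_le_card_inter_of_not_disjoint_classEdges hmeet
  calc R ≤ F ab := hdense _ hab (hds ab)
    _ ≤ ∏ ab, F ab := by
      classical
      rw [← mul_prod_erase univ F (mem_univ ab)]
      exact le_mul_of_one_le_right (zero_le_one.trans (hone ab))
        (Finset.one_le_prod fun ab _ => hone ab)
    _ = N ^ #(classUnion c ∩ classUnion c') *
          p ^ ∑ ab : κ × κ, (#(c ab.1 ∩ c' ab.2)).choose 2 := by
      rw [prod_mul_distrib, prod_pow_eq_pow_sum, prod_pow_eq_pow_sum,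
        card_classUnion_inter hc hc']
    _ ≤ _ := by
      gcongr _ * ?_
      exact pow_le_pow_of_le_one hp0.le hp1 card_classEdges_inter_le

lemma overlapWeight_classEdges_le (hc : Pairwise (Function.onFun Disjoint c))
    (hc' : Pairwise (Function.onFun Disjoint c')) (hcs : ∀ a, #(c a) ≤ s)
    (he : #(classEdges c) = e) (he' : #(classEdges c') = e) (hN : 1 ≤ N) (hp0 : 0 < p)
    (hp1 : p ≤ 1) (hR : 1 ≤ R) (hdense : ∀ d, 2 ≤ d → d ≤ s → R ≤ N ^ d * p ^ d.choose 2) :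
    overlapWeight p (classEdges c) (classEdges c') ≤
      p ^ (2 * e) / R * N ^ #(classUnion c ∩ classUnion c') := by
  rw [overlapWeight]
  split_ifs with hmeet
  · positivity
  have hcard := card_union_add_card_inter (classEdges c) (classEdges c')
  rw [he, he', ← two_mul] at hcard
  have hbound := le_pow_card_classUnion_inter_mul hc hc' hcs hN hp0 hp1 hR hdense hmeet
  rw [div_mul_eq_mul_div, le_div_iff₀ (by positivity), ← hcard, pow_add, mul_assoc]
  gcongr
  rwa [mul_comm]

lemma card_filter_classUnion_eq_le {I : Finset (V × (κ → Finset V))}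
    (hI : ∀ j ∈ I, j.1 ∈ classUnion j.2) (U : Finset V) :
    #{j ∈ I | classUnion j.2 = U} ≤ #U * (2 ^ #U) ^ Fintype.card κ := by
  have hsub : {j ∈ I | classUnion j.2 = U} ⊆ U ×ˢ Fintype.piFinset fun _ : κ => U.powerset := by
    intro j hj
    obtain ⟨hjI, rfl⟩ := mem_filter.mp hj
    rw [mem_product, Fintype.mem_piFinset]
    exact ⟨hI j hjI, fun a => mem_powerset.mpr (subset_biUnion_of_mem j.2 (mem_univ a))⟩
  refine (card_le_card hsub).trans_eq ?_
  rw [card_product, Fintype.card_piFinset, prod_const, card_univ, card_powerset]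

variable [Fintype V]

lemma card_filter_inter_eq_mul_pow_le (V₀ A : Finset V) (r : ℕ) :
    #{U ∈ powersetCard r univ | V₀ ∩ U = A} * Fintype.card V ^ #A ≤ Fintype.card V ^ r := by
  rcases Finset.eq_empty_or_nonempty {U ∈ powersetCard r univ | V₀ ∩ U = A} with hempty | ⟨U₀, hU₀⟩
  · simp [hempty]
  have hAr : #A ≤ r := by
    obtain ⟨hU₀r, rfl⟩ := mem_filter.mp hU₀
    exact (card_le_card inter_subset_right).trans_eq (mem_powersetCard.mp hU₀r).2
  have hfiber : #{U ∈ powersetCard r univ | V₀ ∩ U = A} ≤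
      #(powersetCard (r - #A) (univ : Finset V)) := by
    refine card_le_card_of_injOn (· \ V₀) (fun U hU => ?_) fun U hU U' hU' h => ?_
    · obtain ⟨hUr, rfl⟩ := mem_filter.mp hU
      exact mem_powersetCard.mpr
        ⟨subset_univ _, by rw [card_sdiff, (mem_powersetCard.mp hUr).2]⟩
    · have hinter : V₀ ∩ U = V₀ ∩ U' := (mem_filter.mp hU).2.trans (mem_filter.mp hU').2.symm
      rw [← sdiff_union_inter U V₀, ← sdiff_union_inter U' V₀, inter_comm U, inter_comm U', hinter]
      exact congrArg (· ∪ _) h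
  calc _ ≤ Fintype.card V ^ (r - #A) * Fintype.card V ^ #A := by
        gcongr
        rw [card_powersetCard, card_univ] at hfiber
        exact hfiber.trans (Nat.choose_le_pow _ _)
    _ = Fintype.card V ^ r := by rw [← pow_add, Nat.sub_add_cancel hAr]

lemma sum_powersetCard_pow_card_inter_le (V₀ : Finset V) (r : ℕ) :
    ∑ U ∈ powersetCard r univ, Fintype.card V ^ #(V₀ ∩ U) ≤ 2 ^ #V₀ * Fintype.card V ^ r := by
  have hmaps : ∀ U ∈ powersetCard r univ, V₀ ∩ U ∈ V₀.powerset :=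
    fun U _ => mem_powerset.mpr inter_subset_left
  rw [← sum_fiberwise_of_maps_to hmaps, ← card_powerset, ← smul_eq_mul]
  refine sum_le_card_nsmul _ _ _ fun A _ => ?_
  rw [sum_congr rfl fun U hU => by rw [(mem_filter.mp hU).2], sum_const, smul_eq_mul]
  exact card_filter_inter_eq_mul_pow_le V₀ A r

/-- The constant in the bound on the number of rooted class families, weighted by their overlap with
a fixed one: an `r`-set has at most `r * (2 ^ r) ^ k` structures of `k` classes with a root, and an
overlap is one of `2 ^ r` subsets. -/
def overlapConst (r k : ℕ) : ℕ := r * (2 ^ r) ^ k * 2 ^ r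

lemma overlapConst_pos {r : ℕ} (hr : 0 < r) (k : ℕ) : 0 < overlapConst r k := by
  rw [overlapConst]
  positivity

lemma sum_pow_card_inter_classUnion_le {V₀ : Finset V} {r : ℕ} (hV₀ : #V₀ = r)
    {I : Finset (V × (κ → Finset V))} (hroot : ∀ j ∈ I, j.1 ∈ classUnion j.2)
    (hcard : ∀ j ∈ I, #(classUnion j.2) = r) :
    ∑ j ∈ I, Fintype.card V ^ #(V₀ ∩ classUnion j.2) ≤
      overlapConst r (Fintype.card κ) * Fintype.card V ^ r := by
  have hmaps : ∀ j ∈ I, classUnion j.2 ∈ powersetCard r univ :=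
    fun j hj => mem_powersetCard.mpr ⟨subset_univ _, hcard j hj⟩
  calc ∑ j ∈ I, Fintype.card V ^ #(V₀ ∩ classUnion j.2)
      = ∑ U ∈ powersetCard r univ,
          #{j ∈ I | classUnion j.2 = U} * Fintype.card V ^ #(V₀ ∩ U) := by
        rw [← sum_fiberwise_of_maps_to hmaps]
        refine sum_congr rfl fun U _ => ?_
        rw [sum_congr rfl fun j hj => by rw [(mem_filter.mp hj).2], sum_const, smul_eq_mul]
    _ ≤ ∑ U ∈ powersetCard r univ,
          r * (2 ^ r) ^ Fintype.card κ * Fintype.card V ^ #(V₀ ∩ U) := by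
        refine sum_le_sum fun U hU => Nat.mul_le_mul_right _ ?_
        exact (mem_powersetCard.mp hU).2 ▸ card_filter_classUnion_eq_le hroot U
    _ ≤ overlapConst r (Fintype.card κ) * Fintype.card V ^ r := by
        rw [← mul_sum, overlapConst, mul_assoc (r * _), ← hV₀]
        exact Nat.mul_le_mul_left _ (sum_powersetCard_pow_card_inter_le V₀ #V₀)

end ClassFamilies

/-! ### Rooted copies of `B_{m,s,t}` -/

section RootedCopies

variable {V : Type*} {G : SimpleGraph V} {m s t : ℕ} {x : V} {c : Option (Fin m) → Finset V}

/-- The number of copies of `B_{m,s,t}` in `G` that avoid `Y` and contain `x` in the class of size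
`t`. -/
noncomputable def copyCount (G : SimpleGraph V) (m s t : ℕ) (x : V) (Y : Finset V) : ℕ :=
  Nat.card {q : (Fin m → Finset V) × Finset V //
    IsBCopy G m s t q.1 q.2 ∧ x ∈ q.2 ∧ (∀ i, Disjoint (q.1 i) Y) ∧ Disjoint q.2 Y}

/-- The classes `c` form a copy of `B_{m,s,t}` in `G` with `x` in the class of size `t`, which is
the class with index `none`. -/
def IsRootedCopy (G : SimpleGraph V) (m s t : ℕ) (x : V) (c : Option (Fin m) → Finset V) : Prop :=
  IsBCopy G m s t (fun i => c (some i)) (c none) ∧ x ∈ c none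

/-- The vertices in `X` can be covered by disjoint `(ms+t)`-cliques of `G ⊔ H`, each of them spanned
by a copy of `B_{m,s,t}` in `G` with the covered vertex in the class of size `t`. -/
def HasCliqueCover [DecidableEq V] (G : SimpleGraph V) (m s t : ℕ) (X : Finset V)
    (H : SimpleGraph V) : Prop :=
  ∃ K : V → Finset V,
    (∀ x ∈ X, (G ⊔ H).IsNClique (m * s + t) (K x) ∧
      ∃ (A : Fin m → Finset V) (B : Finset V),
        IsBCopy G m s t A B ∧ x ∈ B ∧ K x = B ∪ univ.biUnion A) ∧
    (∀ x ∈ X, ∀ y ∈ X, x ≠ y → Disjoint (K x) (K y))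

namespace IsRootedCopy

lemma card_none (h : IsRootedCopy G m s t x c) : #(c none) = t := h.1.2.1

lemma card_some (h : IsRootedCopy G m s t x c) (i : Fin m) : #(c (some i)) = s := h.1.1 i

lemma pairwise_disjoint (h : IsRootedCopy G m s t x c) : Pairwise (Function.onFun Disjoint c) := by
  obtain ⟨-, -, hsome, hnone, -, -⟩ := h.1
  rintro (_ | i) (_ | j) hij
  exacts [absurd rfl hij, (hnone j).symm, hnone i, hsome fun h => hij (congrArg some h)]

lemma adj (h : IsRootedCopy G m s t x c) {a b : Option (Fin m)} (hab : a ≠ b) {u v : V}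
    (hu : u ∈ c a) (hv : v ∈ c b) : G.Adj u v := by
  obtain ⟨-, -, -, -, hsome, hnone⟩ := h.1
  rcases a with _ | i <;> rcases b with _ | j
  exacts [absurd rfl hab, (hnone j v hv u hu).symm, hnone i u hu v hv,
    hsome i j (fun h => hab (congrArg some h)) u hu v hv]

lemma card_le (h : IsRootedCopy G m s t x c) (hts : t ≤ s) (a : Option (Fin m)) : #(c a) ≤ s := by
  rcases a with _ | i
  exacts [h.card_none.trans_le hts, (h.card_some i).le]

variable [DecidableEq V]

lemma card_classUnion (h : IsRootedCopy G m s t x c) : #(classUnion c) = m * s + t := by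
  simp [_root_.card_classUnion h.pairwise_disjoint, Fintype.sum_option, h.card_none, h.card_some,
    add_comm]

lemma card_classEdges (h : IsRootedCopy G m s t x c) :
    #(classEdges c) = m * s.choose 2 + t.choose 2 := by
  simp [_root_.card_classEdges h.pairwise_disjoint, Fintype.sum_option, h.card_none, h.card_some,
    add_comm]

lemma mem_classUnion (h : IsRootedCopy G m s t x c) : x ∈ classUnion c :=
  mem_biUnion.mpr ⟨none, mem_univ _, h.2⟩

lemma isNClique (h : IsRootedCopy G m s t x c) {F : Finset (Sym2 V)} (hF : classEdges c ⊆ F) :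
    (G ⊔ SimpleGraph.fromEdgeSet (F : Set (Sym2 V))).IsNClique (m * s + t) (classUnion c) := by
  refine ⟨fun u hu v hv huv => ?_, h.card_classUnion⟩
  obtain ⟨a, -, hua⟩ := mem_biUnion.mp (mem_coe.mp hu)
  obtain ⟨b, -, hvb⟩ := mem_biUnion.mp (mem_coe.mp hv)
  rcases eq_or_ne a b with rfl | hab
  · refine Or.inr ((SimpleGraph.fromEdgeSet_adj _).mpr ⟨hF ?_, huv⟩)
    exact mem_biUnion.mpr ⟨a, mem_univ a, mk_mem_innerPairs.mpr ⟨hua, hvb, huv⟩⟩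
  · exact Or.inl (h.adj hab hua hvb)

end IsRootedCopy

variable [DecidableEq V]

lemma classUnion_option (c : Option (Fin m) → Finset V) :
    classUnion c = c none ∪ univ.biUnion fun i => c (some i) := by
  ext v
  simp [classUnion, Option.exists]

-- A copy rooted at `x` avoids all other roots, so only its remaining `ms + t - 1` vertices have to
-- be made disjoint by Haxell's theorem.
theorem hasCliqueCover_of_forall_exists_isRootedCopy {X : Finset V} {F : Finset (Sym2 V)}
    (hF : ∀ S ⊆ X, S.Nonempty → ∀ Y : Finset V, #Y ≤ (2 * (m * s + t - 1) - 1) * (#S - 1) →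
      ∃ x ∈ S, ∃ c, IsRootedCopy G m s t x c ∧ Disjoint (classUnion c) ((X ∪ Y).erase x) ∧
        classEdges c ⊆ F) :
    HasCliqueCover G m s t X (SimpleGraph.fromEdgeSet (F : Set (Sym2 V))) := by
  set E : V → Set (Finset V) := fun x => {e | ∃ c, IsRootedCopy G m s t x c ∧
    Disjoint (classUnion c) (X.erase x) ∧ classEdges c ⊆ F ∧ (classUnion c).erase x = e}
  have hcard : ∀ x ∈ X, ∀ e ∈ E x, #e ≤ m * s + t - 1 := by
    rintro x - e ⟨c, hc, -, -, rfl⟩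
    rw [card_erase_of_mem hc.mem_classUnion, hc.card_classUnion]
  obtain ⟨f, hf⟩ : ∃ f, IsDisjointSystem E X f := by
    refine haxell hcard fun S hS hSne Y hY => ?_
    obtain ⟨x, hx, c, hc, hdisj, hcF⟩ := hF S hS hSne Y hY
    refine ⟨x, hx, _, ⟨c, hc, ?_, hcF, rfl⟩, ?_⟩
    · exact hdisj.mono_right (erase_subset_erase _ subset_union_left)
    · rw [disjoint_erase_comm]
      exact hdisj.mono_right (erase_subset_erase _ subset_union_right)
  choose! c hc hcX hcF hcf using hf.mem
  refine ⟨fun x => classUnion (c x), fun x hx => ⟨(hc x hx).isNClique (hcF x hx), _, _,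
    (hc x hx).1, (hc x hx).2, classUnion_option (c x)⟩, fun x hx y hy hxy => ?_⟩
  have hxy' : Disjoint ((classUnion (c x)).erase x) ((classUnion (c y)).erase y) := by
    rw [hcf x hx, hcf y hy]
    exact hf.pairwiseDisjoint hx hy hxy
  refine disjoint_left.mpr fun z hzx hzy => ?_
  have hzx' : z ≠ x := fun h =>
    disjoint_left.mp (hcX y hy) hzy (mem_erase.mpr ⟨h ▸ hxy, h ▸ hx⟩)
  have hzy' : z ≠ y := fun h =>
    disjoint_left.mp (hcX x hx) hzx (mem_erase.mpr ⟨h ▸ hxy.symm, h ▸ hy⟩)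
  exact disjoint_left.mp hxy' (mem_erase.mpr ⟨hzx', hzx⟩) (mem_erase.mpr ⟨hzy', hzy⟩)

variable [Fintype V] {S Z : Finset V} {p R ν : ℝ}

/-- The copies of `B_{m,s,t}` in `G` rooted at some `x ∈ S` and avoiding `Z \ {x}`, each together
with its root. -/
noncomputable def rootedCopies (G : SimpleGraph V) (m s t : ℕ) (S Z : Finset V) :
    Finset (V × (Option (Fin m) → Finset V)) :=
  {j | j.1 ∈ S ∧ IsRootedCopy G m s t j.1 j.2 ∧ Disjoint (classUnion j.2) (Z.erase j.1)}

lemma mem_rootedCopies {j : V × (Option (Fin m) → Finset V)} : j ∈ rootedCopies G m s t S Z ↔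
    j.1 ∈ S ∧ IsRootedCopy G m s t j.1 j.2 ∧ Disjoint (classUnion j.2) (Z.erase j.1) := by
  simp [rootedCopies]

lemma copyCount_le_card_filter_rootedCopies (hx : x ∈ S) :
    copyCount G m s t x (Z.erase x) ≤ #{j ∈ rootedCopies G m s t S Z | j.1 = x} := by
  rw [copyCount, Nat.card_eq_fintype_card, Fintype.card_subtype]
  refine card_le_card_of_injOn (fun q => (x, fun o => o.elim q.2 q.1)) (fun q hq => ?_) ?_
  · obtain ⟨hq, hxq, hA, hB⟩ := (mem_filter.mp hq).2
    refine mem_filter.mpr ⟨mem_rootedCopies.mpr ⟨hx, ⟨hq, hxq⟩, ?_⟩, rfl⟩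
    rw [classUnion_option, disjoint_union_left, disjoint_biUnion_left]
    exact ⟨hB, fun i _ => hA i⟩
  · intro q _ q' _ h
    have hclasses := (Prod.mk.inj h).2
    exact Prod.ext (funext fun i => congrFun hclasses (some i)) (congrFun hclasses none)

lemma card_mul_le_card_rootedCopies {a : ℝ}
    (hcount : ∀ x ∈ S, a ≤ copyCount G m s t x (Z.erase x)) :
    #S * a ≤ #(rootedCopies G m s t S Z) := by
  rw [card_eq_sum_card_fiberwise fun j hj => (mem_rootedCopies.mp hj).1, ← nsmul_eq_mul]
  push_cast
  refine card_nsmul_le_sum _ _ _ fun x hx => (hcount x hx).trans ?_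
  exact_mod_cast copyCount_le_card_filter_rootedCopies hx

lemma overlapSum_rootedCopies_le (hts : t ≤ s) (hp0 : 0 < p) (hp1 : p ≤ 1) (hR : 1 ≤ R)
    (hdense : ∀ d, 2 ≤ d → d ≤ s → R ≤ (Fintype.card V : ℝ) ^ d * p ^ d.choose 2) :
    overlapSum p (fun j => classEdges j.2) (rootedCopies G m s t S Z) ≤
      #(rootedCopies G m s t S Z) * (p ^ (2 * (m * s.choose 2 + t.choose 2)) / R *
        (overlapConst (m * s + t) (m + 1) * (Fintype.card V : ℝ) ^ (m * s + t))) := by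
  rw [overlapSum, ← nsmul_eq_mul]
  refine sum_le_card_nsmul _ _ _ fun i hi => ?_
  obtain ⟨-, hiroot, -⟩ := mem_rootedCopies.mp hi
  have hcard : (1 : ℝ) ≤ Fintype.card V := by
    exact_mod_cast Fintype.card_pos_iff.mpr ⟨i.1⟩
  have hcount := sum_pow_card_inter_classUnion_le hiroot.card_classUnion
    (fun j hj => (mem_rootedCopies.mp hj).2.1.mem_classUnion)
    (fun j hj => (mem_rootedCopies.mp hj).2.1.card_classUnion) (I := rootedCopies G m s t S Z)
  rw [Fintype.card_option, Fintype.card_fin] at hcount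
  calc _ ≤ ∑ j ∈ rootedCopies G m s t S Z, p ^ (2 * (m * s.choose 2 + t.choose 2)) / R *
        (Fintype.card V : ℝ) ^ #(classUnion i.2 ∩ classUnion j.2) := by
        refine sum_le_sum fun j hj => ?_
        obtain ⟨-, hjroot, -⟩ := mem_rootedCopies.mp hj
        exact overlapWeight_classEdges_le hiroot.pairwise_disjoint hjroot.pairwise_disjoint
          (hiroot.card_le hts) hiroot.card_classEdges hjroot.card_classEdges hcard hp0 hp1 hR hdense
    _ ≤ _ := by
        rw [← mul_sum]
        gcongr
        exact_mod_cast hcount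

/-- No rooted copy of `B_{m,s,t}` at a vertex of `S` that avoids `Z` away from its root is completed
to a clique by the edge set `F`. -/
def IsObstructed (G : SimpleGraph V) (m s t : ℕ) (S Z : Finset V) (F : Finset (Sym2 V)) : Prop :=
  ∀ j ∈ rootedCopies G m s t S Z, ¬ classEdges j.2 ⊆ F

theorem binomialProb_isObstructed_le (ht : 1 ≤ t) (hts : t ≤ s) (hp0 : 0 < p) (hp1 : p ≤ 1)
    (hR : 1 ≤ R)
    (hdense : ∀ d, 2 ≤ d → d ≤ s → R ≤ (Fintype.card V : ℝ) ^ d * p ^ d.choose 2)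
    (hcount : ∀ x ∈ S,
      ν * (Fintype.card V : ℝ) ^ (m * s + t - 1) ≤ copyCount G m s t x (Z.erase x)) :
    binomialProb (innerPairs univ) p (IsObstructed G m s t S Z) ≤
      Real.exp (-(#S * (ν * R) / (2 * overlapConst (m * s + t) (m + 1) * Fintype.card V))) := by
  set I := rootedCopies G m s t S Z
  set e := m * s.choose 2 + t.choose 2
  set K := overlapConst (m * s + t) (m + 1)
  set N := (Fintype.card V : ℝ)
  have hK : (0 : ℝ) < K := by exact_mod_cast overlapConst_pos (by omega) _
  have hjanson := janson_inequality hp0.le hp1 (fun j _ => classEdges_subset_innerPairs_univ)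
    (overlapSum_rootedCopies_le (G := G) (m := m) (S := S) (Z := Z) hts hp0 hp1 hR hdense)
  have hmean : ∑ j ∈ I, p ^ #(classEdges j.2) = #I * p ^ e := by
    rw [sum_congr rfl fun j hj => by rw [(mem_rootedCopies.mp hj).2.1.card_classEdges],
      sum_const, nsmul_eq_mul]
  refine hjanson.trans (Real.exp_le_exp.mpr (neg_le_neg ?_))
  rw [hmean]
  rcases isEmpty_or_nonempty V with hV | hV
  · simp only [eq_empty_of_isEmpty S, card_empty, Nat.cast_zero, zero_mul, zero_div]
    positivity
  have hN : 0 < N := Nat.cast_pos.mpr Fintype.card_pos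
  have hI : #S * (ν * N ^ (m * s + t - 1)) ≤ #I := card_mul_le_card_rootedCopies hcount
  calc #S * (ν * R) / (2 * K * N)
      = #S * (ν * N ^ (m * s + t - 1)) * (R / (2 * K * N ^ (m * s + t))) := by
        rw [← pow_sub_one_mul (show m * s + t ≠ 0 by omega) N]
        field_simp
    _ ≤ #I * (R / (2 * K * N ^ (m * s + t))) := by gcongr
    _ = (#I * p ^ e) ^ 2 / (2 * (#I * (p ^ (2 * e) / R * (K * N ^ (m * s + t))))) := by
        rcases Nat.eq_zero_or_pos #I with hI0 | hI0
        · simp [hI0]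
        have : (0 : ℝ) < #I := by exact_mod_cast hI0
        rw [mul_comm 2 e, pow_mul]
        field_simp

end RootedCopies

/-! ### The edge probability -/

section EdgeProbability

open Filter Topology

variable {s : ℕ} {C : ℝ}

/-- The edge probability `C n^{-2/s} (log n)^{2/(s(s-1))}`. -/
noncomputable def edgeProb (C : ℝ) (s n : ℕ) : ℝ :=
  C * (n : ℝ) ^ (-(2 : ℝ) / s) * Real.log n ^ ((2 : ℝ) / (s * (s - 1)))

lemma edgeProb_pos (hC : 0 < C) {n : ℕ} (hn : 1 < n) : 0 < edgeProb C s n := by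
  have hlog : 0 < Real.log n := Real.log_pos (by exact_mod_cast hn)
  rw [edgeProb]
  positivity

lemma eventually_edgeProb_le_one (hs : 0 < s) (hC : 0 < C) :
    ∀ᶠ n : ℕ in atTop, edgeProb C s n ≤ 1 := by
  have hlog := (isLittleO_log_rpow_rpow_atTop ((2 : ℝ) / (s * (s - 1)))
    (show (0 : ℝ) < 2 / s by positivity)).bound (inv_pos.mpr hC)
  filter_upwards [tendsto_natCast_atTop_atTop.eventually hlog, eventually_gt_atTop 0] with n hlog hn
  have hlog0 := Real.log_natCast_nonneg n
  rw [Real.norm_of_nonneg (by positivity), Real.norm_of_nonneg (by positivity)] at hlog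
  calc edgeProb C s n ≤ C * (n : ℝ) ^ (-(2 : ℝ) / s) * (C⁻¹ * (n : ℝ) ^ ((2 : ℝ) / s)) := by
        rw [edgeProb]
        gcongr
    _ = 1 := by
        rw [neg_div, Real.rpow_neg n.cast_nonneg]
        field_simp

lemma pow_mul_edgeProb_pow (hs : 0 < s) {n : ℕ} (hn : 0 < n) (d : ℕ) :
    (n : ℝ) ^ d * edgeProb C s n ^ d.choose 2 =
      C ^ d.choose 2 * ((n : ℝ) ^ (1 + ((d : ℝ) - 1) * (s - d) / s) *
        Real.log n ^ ((d : ℝ) * (d - 1) / (s * (s - 1)))) := by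
  have hn0 : (0 : ℝ) < n := by exact_mod_cast hn
  have hnexp : (1 + ((d : ℝ) - 1) * (s - d) / s) = d + -(2 : ℝ) / s * (d * (d - 1) / 2) := by
    field_simp
    ring
  have hlogexp : (d : ℝ) * (d - 1) / (s * (s - 1)) = 2 / (s * (s - 1)) * (d * (d - 1) / 2) := by
    ring
  rw [hnexp, hlogexp, ← Nat.cast_choose_two, Real.rpow_add hn0, Real.rpow_mul hn0.le,
    Real.rpow_mul (Real.log_natCast_nonneg n), Real.rpow_natCast, Real.rpow_natCast,
    Real.rpow_natCast, edgeProb]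
  ring

-- The exponent of `n` exceeds `1` by `(d - 1)(s - d)/s`. This vanishes at `d = s`, where the
-- exponent of the logarithm is `1`, and otherwise the excess beats the logarithm.
lemma mul_log_le_rpow_mul_log_rpow {n : ℕ} (hlog : 1 ≤ Real.log n)
    (hlogn : Real.log n ≤ (n : ℝ) ^ ((1 : ℝ) / s)) {d : ℕ} (hd : 2 ≤ d) (hds : d ≤ s) :
    n * Real.log n ≤ (n : ℝ) ^ (1 + ((d : ℝ) - 1) * (s - d) / s) *
      Real.log n ^ ((d : ℝ) * (d - 1) / (s * (s - 1))) := by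
  have hd' : (2 : ℝ) ≤ d := by exact_mod_cast hd
  have hn : (1 : ℝ) ≤ n := by
    by_contra! h
    have : n = 0 := by exact_mod_cast Nat.lt_one_iff.mp (by exact_mod_cast h)
    norm_num [this] at hlog
  rcases hds.eq_or_lt with rfl | hlt
  · have hne : (d : ℝ) * (d - 1) ≠ 0 := by nlinarith
    simp [div_self hne]
  have hlt' : (d : ℝ) + 1 ≤ s := by exact_mod_cast hlt
  calc n * Real.log n ≤ n * (n : ℝ) ^ ((1 : ℝ) / s) := by gcongr
    _ = (n : ℝ) ^ (1 + (1 : ℝ) / s) := by rw [Real.rpow_add (by positivity), Real.rpow_one]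
    _ ≤ (n : ℝ) ^ (1 + ((d : ℝ) - 1) * (s - d) / s) := by
        refine Real.rpow_le_rpow_of_exponent_le hn ?_
        gcongr
        nlinarith
    _ ≤ _ := by
        refine le_mul_of_one_le_right (by positivity) (Real.one_le_rpow hlog ?_)
        exact div_nonneg (mul_nonneg (by linarith) (by linarith))
          (mul_nonneg (by linarith) (by linarith))

lemma eventually_mul_log_le_pow_mul_edgeProb_pow (hs : 0 < s) (hC : 1 ≤ C) :
    ∀ᶠ n : ℕ in atTop, ∀ d, 2 ≤ d → d ≤ s →
      C * (n * Real.log n) ≤ (n : ℝ) ^ d * edgeProb C s n ^ d.choose 2 := by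
  have hlogn := (isLittleO_log_rpow_atTop (show (0 : ℝ) < 1 / s by positivity)).bound one_pos
  have hlog := Real.tendsto_log_atTop.eventually_ge_atTop 1
  filter_upwards [tendsto_natCast_atTop_atTop.eventually hlogn,
    tendsto_natCast_atTop_atTop.eventually hlog, eventually_gt_atTop 0]
    with n hlogn hlog hn d hd hds
  rw [one_mul, Real.norm_of_nonneg (by positivity), Real.norm_of_nonneg (by positivity)] at hlogn
  have hchoose : d.choose 2 ≠ 0 := (Nat.choose_pos hd).ne'
  rw [pow_mul_edgeProb_pow hs hn]
  exact mul_le_mul (le_self_pow₀ hC hchoose) (mul_log_le_rpow_mul_log_rpow hlog hlogn hd hds)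
    (by positivity) (by positivity)

lemma tendsto_one_add_inv_sq_pow :
    Tendsto (fun n : ℕ => (1 + ((n : ℝ) ^ 2)⁻¹) ^ n) atTop (𝓝 1) := by
  have hexp : Tendsto (fun n : ℕ => Real.exp (n : ℝ)⁻¹) atTop (𝓝 1) :=
    Real.exp_zero ▸ (Real.continuous_exp.tendsto 0).comp tendsto_inv_atTop_nhds_zero_nat
  refine tendsto_of_tendsto_of_tendsto_of_le_of_le tendsto_const_nhds hexp
    (fun n => one_le_pow₀ (le_add_of_nonneg_right (by positivity))) fun n => ?_
  calc (1 + ((n : ℝ) ^ 2)⁻¹) ^ n ≤ Real.exp ((n : ℝ) ^ 2)⁻¹ ^ n := by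
        gcongr
        exact add_comm (1 : ℝ) _ ▸ Real.add_one_le_exp _
    _ = Real.exp (n : ℝ)⁻¹ := by
        rw [← Real.exp_nat_mul]
        congr 1
        rcases eq_or_ne (n : ℝ) 0 with hn | hn
        · simp [hn]
        · field_simp

lemma eventually_one_add_inv_sq_pow_sub_one_mul_le {δ : ℝ} (hδ : 0 < δ) : ∀ᶠ n : ℕ in atTop,
    ((1 + ((n : ℝ) ^ 2)⁻¹) ^ n - 1) * (1 + ((n : ℝ) ^ 2)⁻¹) ^ n ≤ δ :=
  ((tendsto_one_add_inv_sq_pow.sub_const 1).mul tendsto_one_add_inv_sq_pow).eventually_le_const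
    (by simpa using hδ)

end EdgeProbability

/-! ### The union bound over obstructions -/

section UnionBound

variable {V : Type*} [Fintype V]

lemma sum_pow_card_add_card (a : ℝ) :
    ∑ q : Finset V × Finset V with q.1.Nonempty, a ^ (#q.1 + #q.2) =
      ((1 + a) ^ Fintype.card V - 1) * (1 + a) ^ Fintype.card V := by
  have hsum : ∑ Y : Finset V, a ^ #Y = (1 + a) ^ Fintype.card V := by
    simpa only [one_pow, mul_one, add_comm] using Fintype.sum_pow_mul_eq_add_pow V a 1
  have hsum' : ∑ S : Finset V with S.Nonempty, a ^ #S = (1 + a) ^ Fintype.card V - 1 := by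
    have hempty : (univ.filter fun S : Finset V => ¬ S.Nonempty) = {∅} := by
      ext S
      simp [not_nonempty_iff_eq_empty]
    rw [← hsum, ← sum_filter_add_sum_filter_not univ (fun S : Finset V => S.Nonempty), hempty]
    simp
  have hprod : (univ.filter fun q : Finset V × Finset V => q.1.Nonempty) =
      (univ.filter fun S : Finset V => S.Nonempty) ×ˢ univ := by
    ext q
    simp
  rw [hprod, ← hsum', ← hsum, sum_mul_sum, sum_product]
  simp only [pow_add]

variable [DecidableEq V] {G : SimpleGraph V} {m s t : ℕ} {X : Finset V} {p C ν : ℝ}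
  {q : Finset V × Finset V}

/-- The pairs `(S, Y)` for which Haxell's condition in the search for a family of disjoint
`r`-cliques through the vertices of `X` has to be checked. -/
def haxellPairs (r : ℕ) (X : Finset V) : Finset (Finset V × Finset V) :=
  {q | q.1.Nonempty ∧ q.1 ⊆ X ∧ #q.2 ≤ (2 * (r - 1) - 1) * (#q.1 - 1)}

lemma mem_haxellPairs {r : ℕ} : q ∈ haxellPairs r X ↔
    q.1.Nonempty ∧ q.1 ⊆ X ∧ #q.2 ≤ (2 * (r - 1) - 1) * (#q.1 - 1) := by
  simp [haxellPairs]

lemma card_add_card_le_of_mem_haxellPairs {r : ℕ} (hr : 1 ≤ r) (hq : q ∈ haxellPairs r X) :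
    #q.1 + #q.2 ≤ 2 * r * #q.1 := by
  obtain ⟨-, -, hY⟩ := mem_haxellPairs.mp hq
  calc #q.1 + #q.2 ≤ #q.1 + (2 * r - 1) * #q.1 := by
        gcongr
        exact hY.trans (Nat.mul_le_mul (by omega) (Nat.sub_le _ _))
    _ = 2 * r * #q.1 := by
        rw [add_comm, ← Nat.succ_mul]
        congr 1
        omega

lemma card_union_erase_le_of_mem_haxellPairs {r : ℕ} (hr : 1 ≤ r) (hq : q ∈ haxellPairs r X)
    (x : V) : #((X ∪ q.2).erase x) ≤ 2 * r * #X := by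
  have hcard := card_add_card_le_of_mem_haxellPairs hr hq
  have hS : #q.1 ≤ #X := card_le_card (mem_haxellPairs.mp hq).2.1
  calc #((X ∪ q.2).erase x)
      ≤ #X + #q.2 := (card_le_card (erase_subset _ _)).trans (card_union_le _ _)
    _ ≤ 2 * r * #X := by nlinarith

lemma exists_isObstructed_of_not_hasCliqueCover {F : Finset (Sym2 V)}
    (h : ¬ HasCliqueCover G m s t X (SimpleGraph.fromEdgeSet (F : Set (Sym2 V)))) :
    ∃ q ∈ haxellPairs (m * s + t) X, IsObstructed G m s t q.1 (X ∪ q.2) F := by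
  contrapose! h
  refine hasCliqueCover_of_forall_exists_isRootedCopy fun S hS hSne Y hY => ?_
  have hfree := h (S, Y) (mem_haxellPairs.mpr ⟨hSne, hS, hY⟩)
  simp only [IsObstructed, not_forall, not_not] at hfree
  obtain ⟨j, hj, hjF⟩ := hfree
  obtain ⟨hjS, hjroot, hjdisj⟩ := mem_rootedCopies.mp hj
  exact ⟨j.1, hjS, j.2, hjroot, hjdisj, hjF⟩

lemma binomialProb_isObstructed_le_pow (ht : 1 ≤ t) (hts : t ≤ s) (hp0 : 0 < p) (hp1 : p ≤ 1)
    (hR : 1 ≤ C * (Fintype.card V * Real.log (Fintype.card V)))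
    (hdense : ∀ d, 2 ≤ d → d ≤ s → C * (Fintype.card V * Real.log (Fintype.card V)) ≤
      (Fintype.card V : ℝ) ^ d * p ^ d.choose 2)
    (hC : 8 * (m * s + t : ℕ) * overlapConst (m * s + t) (m + 1) ≤ ν * C)
    (hcount : ∀ x ∈ X, ∀ Y, x ∉ Y → #Y ≤ 2 * (m * s + t) * #X →
      ν * (Fintype.card V : ℝ) ^ (m * s + t - 1) ≤ copyCount G m s t x Y)
    (hq : q ∈ haxellPairs (m * s + t) X) :
    binomialProb (innerPairs univ) p (IsObstructed G m s t q.1 (X ∪ q.2)) ≤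
      (((Fintype.card V : ℝ) ^ 2)⁻¹) ^ (#q.1 + #q.2) := by
  set N := (Fintype.card V : ℝ)
  set K := overlapConst (m * s + t) (m + 1)
  have hK : (0 : ℝ) < K := by exact_mod_cast overlapConst_pos (by omega) _
  have hN0 : N ≠ 0 := fun h => by norm_num [h] at hR
  have hN : 0 < N := hN0.symm.lt_of_le (Nat.cast_nonneg _)
  have hlog : 0 ≤ Real.log N := Real.log_natCast_nonneg _
  have hcard : ((#q.1 + #q.2 : ℕ) : ℝ) ≤ 2 * (m * s + t : ℕ) * #q.1 := by
    exact_mod_cast card_add_card_le_of_mem_haxellPairs (by omega) hq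
  refine (binomialProb_isObstructed_le ht hts hp0 hp1 hR hdense fun x hx =>
    hcount x ((mem_haxellPairs.mp hq).2.1 hx) _ (notMem_erase x _)
      (card_union_erase_le_of_mem_haxellPairs (by omega) hq x)).trans ?_
  rw [← Real.exp_log (show 0 < ((N ^ 2)⁻¹) ^ (#q.1 + #q.2) by positivity), Real.exp_le_exp,
    Real.log_pow, Real.log_inv, Real.log_pow, mul_neg, neg_le_neg_iff]
  calc (#q.1 + #q.2 : ℕ) * ((2 : ℕ) * Real.log N)
      ≤ 2 * (m * s + t : ℕ) * #q.1 * ((2 : ℕ) * Real.log N) := by gcongr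
    _ = #q.1 * (8 * (m * s + t : ℕ) * K) * Real.log N / (2 * K) := by
        push_cast
        field_simp
        ring
    _ ≤ #q.1 * (ν * C) * Real.log N / (2 * K) := by gcongr
    _ = #q.1 * (ν * (C * (N * Real.log N))) / (2 * K * N) := by field_simp

theorem one_sub_le_binomialProb_hasCliqueCover (ht : 1 ≤ t) (hts : t ≤ s) (hp0 : 0 < p)
    (hp1 : p ≤ 1) (hR : 1 ≤ C * (Fintype.card V * Real.log (Fintype.card V)))
    (hdense : ∀ d, 2 ≤ d → d ≤ s → C * (Fintype.card V * Real.log (Fintype.card V)) ≤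
      (Fintype.card V : ℝ) ^ d * p ^ d.choose 2)
    (hC : 8 * (m * s + t : ℕ) * overlapConst (m * s + t) (m + 1) ≤ ν * C)
    (hcount : ∀ x ∈ X, ∀ Y, x ∉ Y → #Y ≤ 2 * (m * s + t) * #X →
      ν * (Fintype.card V : ℝ) ^ (m * s + t - 1) ≤ copyCount G m s t x Y) :
    1 - ((1 + ((Fintype.card V : ℝ) ^ 2)⁻¹) ^ Fintype.card V - 1) *
        (1 + ((Fintype.card V : ℝ) ^ 2)⁻¹) ^ Fintype.card V ≤
      binomialProb (innerPairs (univ : Finset V)) p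
        (fun F => HasCliqueCover G m s t X (SimpleGraph.fromEdgeSet (F : Set (Sym2 V)))) := by
  rw [sub_le_comm, ← binomialProb_not, ← sum_pow_card_add_card]
  calc _ ≤ binomialProb (innerPairs univ) p (fun F =>
          ∃ q ∈ haxellPairs (m * s + t) X, IsObstructed G m s t q.1 (X ∪ q.2) F) :=
        binomialProb_mono hp0.le hp1 fun F _ => exists_isObstructed_of_not_hasCliqueCover
    _ ≤ ∑ q ∈ haxellPairs (m * s + t) X,
          binomialProb (innerPairs univ) p (IsObstructed G m s t q.1 (X ∪ q.2)) :=
        binomialProb_exists_le hp0.le hp1 _ _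
    _ ≤ ∑ q ∈ haxellPairs (m * s + t) X, (((Fintype.card V : ℝ) ^ 2)⁻¹) ^ (#q.1 + #q.2) :=
        sum_le_sum fun q hq =>
          binomialProb_isObstructed_le_pow ht hts hp0 hp1 hR hdense hC hcount hq
    _ ≤ _ := by
        refine sum_le_sum_of_subset_of_nonneg (fun q hq => ?_) fun _ _ _ => by positivity
        exact mem_filter.mpr ⟨mem_univ q, (mem_haxellPairs.mp hq).1⟩

end UnionBound

/-! ### The binomial random graph -/

lemma edgeSet_fromEdgeSet_of_subset_innerPairs {V : Type*} [DecidableEq V] {U : Finset V}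
    {F : Finset (Sym2 V)} (hF : F ⊆ innerPairs U) :
    (SimpleGraph.fromEdgeSet (F : Set (Sym2 V))).edgeSet = F := by
  rw [SimpleGraph.edgeSet_fromEdgeSet, sdiff_eq_left, Set.disjoint_left]
  exact fun e he => (mem_filter.mp (hF he)).2

lemma edgeFinset_subset_innerPairs_univ {V : Type*} [Fintype V] [DecidableEq V]
    (H : SimpleGraph V) [Fintype H.edgeSet] : H.edgeFinset ⊆ innerPairs univ :=
  fun _ he => mem_filter.mpr ⟨mem_sym2_iff.mpr fun _ _ => mem_univ _,
    H.not_isDiag_of_mem_edgeFinset he⟩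

lemma Pr_eq_binomialProb (n : ℕ) (p : ℝ) (P : SimpleGraph (Fin n) → Prop) :
    Pr n p P = binomialProb (innerPairs (univ : Finset (Fin n))) p
      (fun F => P (SimpleGraph.fromEdgeSet (F : Set (Sym2 (Fin n))))) := by
  rw [Pr, binomialProb, binomialExpect]
  refine sum_bij' (fun H _ => H.edgeFinset)
    (fun F _ => SimpleGraph.fromEdgeSet (F : Set (Sym2 (Fin n))))
    (fun H _ => mem_powerset.mpr (edgeFinset_subset_innerPairs_univ H)) (fun _ _ => mem_univ _)
    (fun H _ => by simp) (fun F hF => ?_) fun H _ => ?_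
  · rw [← coe_inj, SimpleGraph.coe_edgeFinset,
      edgeSet_fromEdgeSet_of_subset_innerPairs (mem_powerset.mp hF)]
  · have hcount : edgeCount H = #H.edgeFinset := by
      rw [edgeCount, Nat.card_eq_fintype_card, SimpleGraph.edgeFinset_card]
    rw [SimpleGraph.coe_edgeFinset, SimpleGraph.fromEdgeSet_edgeSet, card_innerPairs, hcount,
      card_univ, Fintype.card_fin]
    split_ifs <;> simp

theorem statement8_general (m s t : ℕ) (hs : 2 ≤ s) (ht : 1 ≤ t) (hts : t ≤ s) {ν : ℝ}
    (hν : 0 < ν) :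
    ∃ C : ℝ, 0 < C ∧ ∀ δ : ℝ, 0 < δ → ∃ n₀ : ℕ, ∀ n : ℕ, n₀ ≤ n →
      ∀ G : SimpleGraph (Fin n), ∀ X : Finset (Fin n),
        (∀ x ∈ X, ∀ Y : Finset (Fin n), x ∉ Y → #Y ≤ 2 * (m * s + t) * #X →
          ν * (n : ℝ) ^ (m * s + t - 1) ≤ copyCount G m s t x Y) →
        1 - δ ≤ Pr n (edgeProb C s n) (HasCliqueCover G m s t X) := by
  set C : ℝ := 8 * (m * s + t : ℕ) * overlapConst (m * s + t) (m + 1) / ν + 1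
  have hC : 1 ≤ C := le_add_of_nonneg_left (by positivity)
  have hC0 : 0 < C := one_pos.trans_le hC
  have hνC : 8 * (m * s + t : ℕ) * overlapConst (m * s + t) (m + 1) ≤ ν * C := by
    rw [mul_add, mul_div_cancel₀ _ hν.ne']
    linarith
  refine ⟨C, hC0, fun δ hδ => ?_⟩
  have hlog := tendsto_natCast_atTop_atTop.eventually (Real.tendsto_log_atTop.eventually_ge_atTop 1)
  obtain ⟨n₀, hn₀⟩ := Filter.eventually_atTop.mp <|
    (eventually_one_add_inv_sq_pow_sub_one_mul_le hδ).and <| hlog.and <|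
    (eventually_edgeProb_le_one (s := s) (by omega) hC0).and <|
    (eventually_mul_log_le_pow_mul_edgeProb_pow (s := s) (by omega) hC).and <|
    Filter.eventually_gt_atTop 1
  refine ⟨n₀, fun n hn G X hcount => ?_⟩
  obtain ⟨hfail, hlog, hp1, hdense, hn1⟩ := hn₀ n hn
  have hn1' : (1 : ℝ) ≤ n := by exact_mod_cast hn1.le
  have hR : 1 ≤ C * (n * Real.log n) := one_le_mul_of_one_le_of_one_le hC
    (one_le_mul_of_one_le_of_one_le hn1' hlog)
  have hprob := one_sub_le_binomialProb_hasCliqueCover (G := G) (X := X) (C := C) (m := m) (ν := ν)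
    ht hts (edgeProb_pos hC0 hn1) hp1
  rw [Fintype.card_fin] at hprob
  rw [Pr_eq_binomialProb]
  exact (sub_le_sub_left hfail 1).trans (hprob hR hdense hνC hcount)

/-- Lemma 6.1: covering a small vertex set `X` by vertex-disjoint `K_r`-copies,
each built on a `B_{m,s,t}`-copy of the deterministic graph containing the corresponding
vertex of `X` in the class of size `t`. -/
theorem statement8 (m s t : ℕ) (hm : 1 ≤ m) (hs : 2 ≤ s) (ht : 1 ≤ t) (hts : t ≤ s)
    (ε ν : ℝ) (hε0 : 0 < ε) (hε1 : ε < 1 / 2) (hν0 : 0 < ν) (hν1 : ν < 1 / 2) :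
    ∃ C : ℝ, 0 < C ∧
      ∀ δ : ℝ, 0 < δ → ∃ n₀ : ℕ, ∀ n : ℕ, n₀ ≤ n →
        ∀ G : SimpleGraph (Fin n), ∀ X : Finset (Fin n), (X.card : ℝ) ≤ ε * n →
          (∀ x ∈ X, ∀ Y : Finset (Fin n), x ∉ Y →
            (Y.card : ℝ) ≤ 2 * (m * s + t : ℝ) * ε * n →
            ν * (n : ℝ) ^ (m * s + t - 1) ≤
              (Nat.card {q : (Fin m → Finset (Fin n)) × Finset (Fin n) //
                IsBCopy G m s t q.1 q.2 ∧ x ∈ q.2 ∧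
                (∀ i, Disjoint (q.1 i) Y) ∧ Disjoint q.2 Y} : ℝ)) →
          1 - δ ≤ Pr n (C * (n : ℝ) ^ (-(2 : ℝ) / (s : ℝ)) *
              (Real.log n) ^ ((2 : ℝ) / ((s : ℝ) * ((s : ℝ) - 1))))
            (fun H => ∃ K : Fin n → Finset (Fin n),
              (∀ x ∈ X, (G ⊔ H).IsNClique (m * s + t) (K x) ∧
                ∃ (A : Fin m → Finset (Fin n)) (B : Finset (Fin n)),
                  IsBCopy G m s t A B ∧ x ∈ B ∧ K x = B ∪ Finset.univ.biUnion A) ∧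
              (∀ x ∈ X, ∀ y ∈ X, x ≠ y → Disjoint (K x) (K y))) := by
  obtain ⟨C, hC, hwhp⟩ := statement8_general m s t hs ht hts hν0
  refine ⟨C, hC, fun δ hδ => (hwhp δ hδ).imp fun n₀ hn₀ n hn G X hX hcount => ?_⟩
  refine hn₀ n hn G X fun x hx Y hxY hY => hcount x hx Y hxY ?_
  calc (#Y : ℝ) ≤ 2 * (m * s + t) * #X := by exact_mod_cast hY
    _ ≤ 2 * (m * s + t : ℝ) * ε * n := by
        rw [mul_assoc _ ε]
        gcongr
end

section
/- Let 1 ≤ t ≤ s be integers and r = s + t. There is a constant C = C(s,t) such that for every sufficiently small δ > 0 and all sufficiently large n the following holds with γ = 10srδ: if G is an n-vertex graph with minimum degree δ(G) ≥ (1 − s/r − δ)·n, then either (i) G contains a collection of pairwise vertex-disjoint subgraphs, each isomorphic to K₂ or to Q_{s,t}, that together cover all but at most C vertices of G, or (ii) G has an independent set of size at least (s/r − γ)·n. -/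
open Finset
open scoped Classical

/-- The graph `Q_{s,t}` on `L ⊕ M ⊕ N` where `|L| = s - t`, `|M| = |N| = t`: a complete
bipartite graph between `L` and `M` together with a perfect matching between `M` and `N`. -/
def Qgraph (s t : ℕ) : SimpleGraph (Fin (s - t) ⊕ Fin t ⊕ Fin t) :=
  SimpleGraph.fromRel (fun x y =>
    (∃ a b, x = Sum.inl a ∧ y = Sum.inr (Sum.inl b)) ∨
    (∃ b, x = Sum.inr (Sum.inl b) ∧ y = Sum.inr (Sum.inr b)))

/-!
Take a family of disjoint edges and copies of `K_{s,t}` (which contains `Q_{s,t}` as a spanning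
subgraph) covering as many vertices as possible. If many vertices stay uncovered, fix a large but
bounded set `W` of them; `W` is independent, so it sends all its edges to the pieces. A copy of
`K_{s,t}` either sends at most `(t - 1/2)|W|` edges to `W`, or has a `t`-subset `A` with many
common neighbours in `W`. In the latter case `A` together with `s` of those neighbours is another
copy of `K_{s,t}`, so its remaining `s` vertices may be released. Releasing them from one or two
pieces at a time shows that all releasable vertices together are independent. Only boundedly many
vertices of edge pieces have `s` or more neighbours in `W`, because `t` such vertices with a common
neighbourhood would give a copy of `K_{s,t}` at the cost of at most `2t < s + t` vertices. Hence the
minimum degree forces about `n / (s + t)` pieces to be of the second kind. For `s = t` the exchange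
in the edge pieces gains nothing, but `s = t = 1` does not need it and implies the other cases,
which have the same ratio `s / (s + t)`.
-/

section Tilings

variable {V : Type*}

/-- A tiling: a family of pairwise disjoint vertex sets, all of them pieces in the sense of `P`. -/
structure IsTiling (P : Finset V → Prop) (𝒞 : Finset (Finset V)) : Prop where
  pairwiseDisjoint : (𝒞 : Set (Finset V)).PairwiseDisjoint id
  isPiece : ∀ c ∈ 𝒞, P c

variable [DecidableEq V] {P : Finset V → Prop} {𝒞 𝒟 : Finset (Finset V)} {c d : Finset V}

/-- The exchange operation on tilings: the pieces in `𝒟` are removed and `d` is added. -/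
def exchange (𝒞 𝒟 : Finset (Finset V)) (d : Finset V) : Finset (Finset V) :=
  insert d (𝒞 \ 𝒟)

lemma IsTiling.sum_card_inter_le (h𝒞 : IsTiling P 𝒞) (X : Finset V) :
    ∑ c ∈ 𝒞, #(c ∩ X) ≤ #X := by
  have hdisj : (𝒞 : Set (Finset V)).PairwiseDisjoint fun c => c ∩ X := fun c hc d hd hcd =>
    (h𝒞.pairwiseDisjoint hc hd hcd).mono inter_subset_left inter_subset_left
  rw [← card_biUnion hdisj]
  exact card_le_card (biUnion_subset.2 fun c _ => inter_subset_right)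

variable [Fintype V]

/-- The vertices that lie in no member of the family `𝒞`. -/
def uncovered (𝒞 : Finset (Finset V)) : Finset V :=
  univ \ 𝒞.biUnion id

/-- A tiling by `P`-pieces that leaves as few vertices uncovered as possible. -/
structure IsMaxTiling (P : Finset V → Prop) (𝒞 : Finset (Finset V)) : Prop
    extends IsTiling P 𝒞 where
  card_uncovered_le : ∀ 𝒟, IsTiling P 𝒟 → #(uncovered 𝒞) ≤ #(uncovered 𝒟)

lemma mem_uncovered {v : V} : v ∈ uncovered 𝒞 ↔ ∀ c ∈ 𝒞, v ∉ c := by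
  simp [uncovered]

lemma disjoint_uncovered (hc : c ∈ 𝒞) : Disjoint c (uncovered 𝒞) :=
  disjoint_right.2 fun _ hv => mem_uncovered.1 hv c hc

theorem exists_isMaxTiling (P : Finset V → Prop) : ∃ 𝒞, IsMaxTiling P 𝒞 := by
  have hempty : IsTiling P ∅ := ⟨by simp, by simp⟩
  obtain ⟨𝒞, h𝒞, hmin⟩ := exists_min_image {𝒞 | IsTiling P 𝒞} (fun 𝒞 => #(uncovered 𝒞))
    ⟨∅, by simpa using hempty⟩
  simp only [mem_filter, mem_univ, true_and] at h𝒞 hmin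
  exact ⟨𝒞, h𝒞, hmin⟩

lemma IsTiling.sum_biUnion_add_sum_uncovered (h𝒞 : IsTiling P 𝒞) (f : V → ℕ) :
    ∑ c ∈ 𝒞, ∑ v ∈ c, f v + ∑ v ∈ uncovered 𝒞, f v = ∑ v, f v := by
  rw [uncovered, ← sum_sdiff (subset_univ (𝒞.biUnion id)), sum_biUnion h𝒞.pairwiseDisjoint,
    add_comm]
  rfl

lemma IsTiling.uncovered_exchange (h𝒞 : IsTiling P 𝒞) (h𝒟 : 𝒟 ⊆ 𝒞) (d : Finset V) :
    uncovered (exchange 𝒞 𝒟 d) = (uncovered 𝒞 ∪ 𝒟.biUnion id) \ d := by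
  ext v
  have hunique : ∀ b ∈ 𝒞, ∀ c ∈ 𝒞, v ∈ b → v ∈ c → b = c := fun b hb c hc hvb hvc =>
    h𝒞.pairwiseDisjoint.elim_finset hb hc v hvb hvc
  simp only [mem_uncovered, exchange, mem_sdiff, mem_union, mem_biUnion, mem_insert, id]
  grind

lemma IsTiling.card_uncovered_exchange (h𝒞 : IsTiling P 𝒞) (h𝒟 : 𝒟 ⊆ 𝒞)
    (hd : d ⊆ uncovered 𝒞 ∪ 𝒟.biUnion id) :
    #(uncovered (exchange 𝒞 𝒟 d)) + #d = #(uncovered 𝒞) + #(𝒟.biUnion id) := by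
  have hdisj : Disjoint (uncovered 𝒞) (𝒟.biUnion id) :=
    disjoint_sdiff_self_left.mono_right (biUnion_subset_biUnion_of_subset_left id h𝒟)
  rw [h𝒞.uncovered_exchange h𝒟, card_sdiff_add_card_eq_card hd, card_union_of_disjoint hdisj]

lemma IsTiling.exchange (h𝒞 : IsTiling P 𝒞) (h𝒟 : 𝒟 ⊆ 𝒞) (hPd : P d)
    (hd : d ⊆ uncovered 𝒞 ∪ 𝒟.biUnion id) : IsTiling P (exchange 𝒞 𝒟 d) where
  pairwiseDisjoint := by
    rw [_root_.exchange, coe_insert, Set.pairwiseDisjoint_insert]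
    refine ⟨h𝒞.pairwiseDisjoint.subset (by simp), fun b hb _ => disjoint_left.2 fun v hvd hvb => ?_⟩
    obtain ⟨hb𝒞, hb𝒟⟩ := mem_sdiff.1 (mem_coe.1 hb)
    rcases mem_union.1 (hd hvd) with hv | hv
    · exact mem_uncovered.1 hv b hb𝒞 hvb
    · obtain ⟨c, hc, hvc⟩ := mem_biUnion.1 hv
      exact hb𝒟 (h𝒞.pairwiseDisjoint.elim_finset hb𝒞 (h𝒟 hc) v hvb hvc ▸ hc)
  isPiece b hb := by
    rcases mem_insert.1 hb with rfl | hb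
    · exact hPd
    · exact h𝒞.isPiece b (mem_sdiff.1 hb).1

lemma IsMaxTiling.card_le_card_biUnion (h𝒞 : IsMaxTiling P 𝒞) (h𝒟 : 𝒟 ⊆ 𝒞) (hPd : P d)
    (hd : d ⊆ uncovered 𝒞 ∪ 𝒟.biUnion id) : #d ≤ #(𝒟.biUnion id) := by
  have hmax := h𝒞.card_uncovered_le _ (h𝒞.exchange h𝒟 hPd hd)
  have hcard := h𝒞.card_uncovered_exchange h𝒟 hd
  omega

lemma IsMaxTiling.exchange_singleton (h𝒞 : IsMaxTiling P 𝒞) (hc : c ∈ 𝒞) (hPd : P d)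
    (hd : d ⊆ uncovered 𝒞 ∪ c) (hcard : #d = #c) : IsMaxTiling P (exchange 𝒞 {c} d) where
  toIsTiling := h𝒞.exchange (singleton_subset_iff.2 hc) hPd (by simpa using hd)
  card_uncovered_le 𝒟 h𝒟 := by
    have hmax := h𝒞.card_uncovered_le 𝒟 h𝒟
    have hcard' := h𝒞.card_uncovered_exchange (d := d) (singleton_subset_iff.2 hc)
      (by simpa using hd)
    rw [singleton_biUnion, id] at hcard'
    omega

end Tilings

section DegreeIn

variable {V : Type*} (G : SimpleGraph V) [DecidableRel G.Adj]

/-- The number of neighbours of `v` in the set `W`. -/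
def degreeIn (W : Finset V) (v : V) : ℕ := #{u ∈ W | G.Adj v u}

/-- The vertices of `W` adjacent to all vertices of `A`. -/
def commonNeighborsIn (W A : Finset V) : Finset V := {u ∈ W | ∀ a ∈ A, G.Adj a u}

variable {G} {W c : Finset V}

lemma degreeIn_le_card (W : Finset V) (v : V) : degreeIn G W v ≤ #W :=
  card_filter_le _ _

lemma degreeIn_eq_zero {v : V} (h : ∀ u ∈ W, ¬ G.Adj v u) : degreeIn G W v = 0 := by
  rwa [degreeIn, card_eq_zero, filter_eq_empty_iff]

lemma degreeIn_univ [Fintype V] (v : V) : degreeIn G univ v = G.degree v := by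
  rw [degreeIn, ← G.card_neighborFinset_eq_degree, G.neighborFinset_eq_filter]

lemma sum_degreeIn_comm (c W : Finset V) :
    ∑ v ∈ c, degreeIn G W v = ∑ u ∈ W, degreeIn G c u := by
  rw [show ∑ v ∈ c, degreeIn G W v = ∑ u ∈ W, #{v ∈ c | G.Adj v u} from
    sum_card_bipartiteAbove_eq_sum_card_bipartiteBelow G.Adj]
  exact sum_congr rfl fun u _ => congrArg card (filter_congr fun v _ => G.adj_comm v u)

lemma card_filter_le_degreeIn_le {t h : ℕ}
    (hcommon : ∀ A ⊆ c, #A = t → #(commonNeighborsIn G W A) ≤ h) :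
    #{u ∈ W | t ≤ degreeIn G c u} ≤ h * 2 ^ #c := by
  have hsub : {u ∈ W | t ≤ degreeIn G c u} ⊆
      (powersetCard t c).biUnion (commonNeighborsIn G W) := by
    intro u hu
    obtain ⟨huW, htu⟩ := mem_filter.1 hu
    obtain ⟨A, hA, hAt⟩ := exists_subset_card_eq htu
    exact mem_biUnion.2 ⟨A, mem_powersetCard.2 ⟨hA.trans (filter_subset _ _), hAt⟩,
      mem_filter.2 ⟨huW, fun a ha => (mem_filter.1 (hA ha)).2.symm⟩⟩
  calc #{u ∈ W | t ≤ degreeIn G c u}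
      ≤ #(powersetCard t c) * h := (card_le_card hsub).trans <|
        card_biUnion_le_card_mul _ _ h fun A hA =>
          hcommon A (mem_powersetCard.1 hA).1 (mem_powersetCard.1 hA).2
    _ ≤ h * 2 ^ #c := by
        rw [card_powersetCard, mul_comm]
        gcongr
        exact Nat.choose_le_two_pow _ _

lemma sum_degreeIn_add_card_le {t h : ℕ} (ht : 1 ≤ t)
    (hcommon : ∀ A ⊆ c, #A = t → #(commonNeighborsIn G W A) ≤ h) :
    ∑ v ∈ c, degreeIn G W v + #W ≤ t * #W + #c * (h * 2 ^ #c) := by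
  have hpointwise : ∀ u ∈ W, degreeIn G c u + 1 ≤ t + if t ≤ degreeIn G c u then #c else 0 := by
    intro u _
    have := degreeIn_le_card (G := G) c u
    split_ifs <;> omega
  calc ∑ v ∈ c, degreeIn G W v + #W
      = ∑ u ∈ W, (degreeIn G c u + 1) := by
        rw [sum_degreeIn_comm, sum_add_distrib, card_eq_sum_ones]
    _ ≤ ∑ u ∈ W, (t + if t ≤ degreeIn G c u then #c else 0) := sum_le_sum hpointwise
    _ = t * #W + #c * #{u ∈ W | t ≤ degreeIn G c u} := by
        rw [sum_add_distrib, ← sum_filter, sum_const, sum_const, smul_eq_mul, smul_eq_mul,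
          mul_comm t, mul_comm #c]
    _ ≤ t * #W + #c * (h * 2 ^ #c) := by
        gcongr
        exact card_filter_le_degreeIn_le hcommon

end DegreeIn

section Cores

variable {V : Type*} {G : SimpleGraph V} [DecidableRel G.Adj] {s t : ℕ} {W c A : Finset V}

/-- A releasable part of `c`: some `s` of the common neighbours of the core `A` in `W` can take over
the role of the `s` vertices of `c \ A`. Asking for `2 * s` common neighbours lets two pieces do so
simultaneously on disjoint subsets of `W`. -/
structure IsCore (G : SimpleGraph V) [DecidableRel G.Adj] (s t : ℕ) (W c A : Finset V) :
    Prop where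
  card_piece : #c = s + t
  subset : A ⊆ c
  card_eq : #A = t
  le_card_common : 2 * s ≤ #(commonNeighborsIn G W A)

lemma IsCore.card_sdiff [DecidableEq V] (hA : IsCore G s t W c A) : #(c \ A) = s := by
  rw [card_sdiff_of_subset hA.subset, hA.card_piece, hA.card_eq, Nat.add_sub_cancel]

lemma IsCore.exists_isCompleteBetween (hA : IsCore G s t W c A) {F : Finset V} (hF : #F ≤ s) :
    ∃ S ⊆ W, #S = s ∧ G.IsCompleteBetween A S ∧ Disjoint F S := by
  have hle : s ≤ #(commonNeighborsIn G W A \ F) := by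
    have := le_card_sdiff F (commonNeighborsIn G W A)
    have := hA.le_card_common
    omega
  obtain ⟨S, hS, hSs⟩ := exists_subset_card_eq hle
  simp only [subset_iff, commonNeighborsIn, mem_sdiff, mem_filter] at hS
  exact ⟨S, fun v hv => (hS hv).1.1, hSs, fun a ha v hv => (hS hv).1.2 a ha,
    disjoint_right.2 fun v hv => (hS hv).2⟩

lemma IsTiling.card_biUnion_sdiff [DecidableEq V] {P : Finset V → Prop}
    {𝒞 𝒟 : Finset (Finset V)} (h𝒞 : IsTiling P 𝒞) (h𝒟 : 𝒟 ⊆ 𝒞) {core : Finset V → Finset V}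
    (hcore : ∀ c ∈ 𝒟, IsCore G s t W c (core c)) :
    #(𝒟.biUnion fun c => c \ core c) = #𝒟 * s := by
  have hdisj : (𝒟 : Set (Finset V)).PairwiseDisjoint fun c => c \ core c := fun c hc d hd hcd =>
    (h𝒞.pairwiseDisjoint (h𝒟 hc) (h𝒟 hd) hcd).mono sdiff_subset sdiff_subset
  rw [card_biUnion hdisj]
  exact sum_const_nat fun c hc => (hcore c hc).card_sdiff

lemma two_mul_sum_degreeIn_add_card_le (ht : 1 ≤ t) (hc : #c = s + t)
    (hW : 4 * s * (s + t) * 2 ^ (s + t) ≤ #W) (hcore : ¬ ∃ A, IsCore G s t W c A) :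
    2 * ∑ v ∈ c, degreeIn G W v + #W ≤ 2 * t * #W := by
  have hcommon : ∀ A ⊆ c, #A = t → #(commonNeighborsIn G W A) ≤ 2 * s := by
    intro A hA hAt
    by_contra! hlt
    exact hcore ⟨A, hc, hA, hAt, hlt.le⟩
  have hsum := sum_degreeIn_add_card_le ht hcommon
  rw [hc] at hsum
  linarith

end Cores

section Bicliques

variable {V : Type*} [DecidableEq V] {G : SimpleGraph V} {s t : ℕ} {c d A A' S W : Finset V}

/-- The set `c` spans a copy of `K_{s,t}` (not necessarily induced). -/
def IsBiclique (G : SimpleGraph V) (s t : ℕ) (c : Finset V) : Prop :=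
  ∃ A S : Finset V, #A = t ∧ #S = s ∧ G.IsCompleteBetween A S ∧ A ∪ S = c

/-- The pieces of our tilings: the edges and the vertex sets of copies of `K_{s,t}`. -/
def IsEdgeOrBiclique (G : SimpleGraph V) (s t : ℕ) (c : Finset V) : Prop :=
  G.IsNClique 2 c ∨ IsBiclique G s t c

lemma isNClique_two_pair {x y : V} (h : G.Adj x y) : G.IsNClique 2 {x, y} :=
  ⟨by simp [h], card_pair h.ne⟩

lemma IsBiclique.card_eq (hc : IsBiclique G s t c) : #c = s + t := by
  obtain ⟨A, S, rfl, rfl, hAS, rfl⟩ := hc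
  rw [card_union_of_disjoint (disjoint_coe.1 hAS.disjoint), add_comm]

lemma IsBiclique.isNClique_two (hc : IsBiclique G 1 1 c) : G.IsNClique 2 c := by
  obtain ⟨A, S, hA, hS, hAS, rfl⟩ := hc
  obtain ⟨a, rfl⟩ := card_eq_one.1 hA
  obtain ⟨b, rfl⟩ := card_eq_one.1 hS
  exact isNClique_two_pair (hAS (by simp) (by simp))

lemma IsEdgeOrBiclique.card_eq_two (hc : IsEdgeOrBiclique G s t c) (hcard : #c ≠ s + t) :
    #c = 2 :=
  (hc.resolve_right fun hb => hcard hb.card_eq).card_eq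

lemma IsEdgeOrBiclique.isNClique_two (hc : IsEdgeOrBiclique G 1 1 c) : G.IsNClique 2 c :=
  hc.elim id IsBiclique.isNClique_two

variable [Fintype V] {𝒞 𝒟 : Finset (Finset V)}

lemma IsMaxTiling.not_adj_of_mem_uncovered (h𝒞 : IsMaxTiling (IsEdgeOrBiclique G s t) 𝒞) {x y : V}
    (hx : x ∈ uncovered 𝒞) (hy : y ∈ uncovered 𝒞) : ¬ G.Adj x y := by
  intro hxy
  have hcard := h𝒞.card_le_card_biUnion (empty_subset 𝒞) (Or.inl (isNClique_two_pair hxy))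
    (by simp [insert_subset_iff, hx, hy])
  simp [card_pair hxy.ne] at hcard

lemma IsMaxTiling.release (h𝒞 : IsMaxTiling (IsEdgeOrBiclique G s t) 𝒞) (hc : c ∈ 𝒞)
    (hcard : #c = s + t) (hA : A ⊆ c) (hAt : #A = t) (hS : S ⊆ uncovered 𝒞) (hSs : #S = s)
    (hAS : G.IsCompleteBetween A S) :
    IsMaxTiling (IsEdgeOrBiclique G s t) (exchange 𝒞 {c} (A ∪ S)) ∧
      uncovered (exchange 𝒞 {c} (A ∪ S)) = (uncovered 𝒞 \ S) ∪ (c \ A) := by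
  have hbiclique : IsBiclique G s t (A ∪ S) := ⟨A, S, hAt, hSs, hAS, rfl⟩
  refine ⟨h𝒞.exchange_singleton hc (Or.inr hbiclique) ?_ (hbiclique.card_eq.trans hcard.symm), ?_⟩
  · exact union_subset (hA.trans subset_union_right) (hS.trans subset_union_left)
  · have hdisj := disjoint_left.1 (disjoint_uncovered hc)
    rw [h𝒞.uncovered_exchange (singleton_subset_iff.2 hc), singleton_biUnion, id]
    grind

lemma IsMaxTiling.card_lt_of_isCompleteBetween (h𝒞 : IsMaxTiling (IsEdgeOrBiclique G s t) 𝒞)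
    (hts : t < s) {X : Finset V} (hX : ∀ x ∈ X, ∃ c ∈ 𝒞, x ∈ c ∧ #c = 2)
    (hS : S ⊆ uncovered 𝒞) (hSs : s ≤ #S) (hXS : G.IsCompleteBetween X S) : #X < t := by
  by_contra! htX
  obtain ⟨A, hAX, rfl⟩ := exists_subset_card_eq htX
  obtain ⟨T, hTS, rfl⟩ := exists_subset_card_eq hSs
  choose! piece hpiece hmem hpair using hX
  have hbiclique : IsBiclique G #T #A (A ∪ T) :=
    ⟨A, T, rfl, rfl, fun a ha v hv => hXS (hAX ha) (hTS hv), rfl⟩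
  have hgain : #(A ∪ T) ≤ #((A.image piece).biUnion id) := by
    refine h𝒞.card_le_card_biUnion (image_subset_iff.2 fun a ha => hpiece a (hAX ha))
      (Or.inr hbiclique) (union_subset (fun a ha => mem_union_right _ ?_)
        ((hTS.trans hS).trans subset_union_left))
    exact mem_biUnion.2 ⟨piece a, mem_image_of_mem piece ha, hmem a (hAX ha)⟩
  have hcost : #((A.image piece).biUnion id) ≤ #(A.image piece) * 2 :=
    card_biUnion_le_card_mul _ _ _ (forall_mem_image.2 fun a ha => (hpair a (hAX ha)).le)
  have himage : #(A.image piece) ≤ #A := card_image_le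
  rw [hbiclique.card_eq] at hgain
  omega

variable [DecidableRel G.Adj]

lemma IsMaxTiling.not_adj_of_isCore (h𝒞 : IsMaxTiling (IsEdgeOrBiclique G s t) 𝒞) (hs : 1 ≤ s)
    (hW : W ⊆ uncovered 𝒞) (hc : c ∈ 𝒞) (hA : IsCore G s t W c A) {x y : V} (hx : x ∈ c \ A)
    (hy : y ∈ uncovered 𝒞 ∪ (c \ A)) : ¬ G.Adj x y := by
  obtain ⟨S, hSW, hSs, hAS, hyS⟩ := hA.exists_isCompleteBetween (F := {y}) (by simpa using hs)
  obtain ⟨hmax, huncovered⟩ :=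
    h𝒞.release hc hA.card_piece hA.subset hA.card_eq (hSW.trans hW) hSs hAS
  rw [disjoint_singleton_left] at hyS
  apply hmax.not_adj_of_mem_uncovered <;> rw [huncovered] <;> grind

lemma IsMaxTiling.not_adj_of_isCore_of_ne (h𝒞 : IsMaxTiling (IsEdgeOrBiclique G s t) 𝒞)
    (hW : W ⊆ uncovered 𝒞) (hc : c ∈ 𝒞) (hA : IsCore G s t W c A) (hd : d ∈ 𝒞)
    (hA' : IsCore G s t W d A') (hcd : c ≠ d) {x y : V} (hx : x ∈ c \ A) (hy : y ∈ d \ A') :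
    ¬ G.Adj x y := by
  obtain ⟨S, hSW, hSs, hAS, -⟩ := hA.exists_isCompleteBetween (F := ∅) (by simp)
  obtain ⟨S', hSW', hSs', hAS', hSS'⟩ := hA'.exists_isCompleteBetween hSs.le
  obtain ⟨hmax, huncovered⟩ :=
    h𝒞.release hc hA.card_piece hA.subset hA.card_eq (hSW.trans hW) hSs hAS
  have hd_mem : d ∈ exchange 𝒞 {c} (A ∪ S) := by simp [exchange, hd, hcd.symm]
  have hS'_uncovered : S' ⊆ uncovered (exchange 𝒞 {c} (A ∪ S)) := by
    rw [huncovered]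
    exact (subset_sdiff.2 ⟨hSW'.trans hW, hSS'.symm⟩).trans subset_union_left
  obtain ⟨hmax', huncovered'⟩ := hmax.release hd_mem hA'.card_piece hA'.subset hA'.card_eq
    hS'_uncovered hSs' hAS'
  have hx_notMem : x ∉ S' := fun hxS' =>
    disjoint_left.1 (disjoint_uncovered hc) (mem_sdiff.1 hx).1 (hW (hSW' hxS'))
  apply hmax'.not_adj_of_mem_uncovered <;> rw [huncovered', huncovered] <;> grind

lemma IsMaxTiling.isIndepSet_biUnion_sdiff (h𝒞 : IsMaxTiling (IsEdgeOrBiclique G s t) 𝒞)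
    (hs : 1 ≤ s) (hW : W ⊆ uncovered 𝒞) (h𝒟 : 𝒟 ⊆ 𝒞) {core : Finset V → Finset V}
    (hcore : ∀ c ∈ 𝒟, IsCore G s t W c (core c)) :
    G.IsIndepSet (𝒟.biUnion fun c => c \ core c : Finset V) := by
  intro x hx y hy _
  obtain ⟨c, hc, hxc⟩ := mem_biUnion.1 (mem_coe.1 hx)
  obtain ⟨d, hd, hyd⟩ := mem_biUnion.1 (mem_coe.1 hy)
  rcases eq_or_ne c d with rfl | hcd
  · exact h𝒞.not_adj_of_isCore hs hW (h𝒟 hc) (hcore c hc) hxc (mem_union_right _ hyd)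
  · exact h𝒞.not_adj_of_isCore_of_ne hW (h𝒟 hc) (hcore c hc) (h𝒟 hd) (hcore d hd) hcd hxc hyd

end Bicliques

section Counting

variable {V : Type*} [Fintype V] [DecidableEq V] {G : SimpleGraph V} [DecidableRel G.Adj] {s t : ℕ}
  {𝒞 : Finset (Finset V)} {W c A : Finset V}

/-- The pieces of `𝒞` that have a core with respect to `W`. -/
noncomputable def corePieces (G : SimpleGraph V) [DecidableRel G.Adj] (s t : ℕ)
    (𝒞 : Finset (Finset V)) (W : Finset V) : Finset (Finset V) :=
  {c ∈ 𝒞 | ∃ A, IsCore G s t W c A}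

/-- The vertices with at least `s` neighbours in `W` that are covered by an edge of `𝒞`. For
`s + t = 2` edges count as copies of `K_{s,t}`, and there are no such vertices. -/
noncomputable def heavyVertices (G : SimpleGraph V) [DecidableRel G.Adj] (s t : ℕ)
    (𝒞 : Finset (Finset V)) (W : Finset V) : Finset V :=
  {v | (∃ c ∈ 𝒞, v ∈ c ∧ #c ≠ s + t) ∧ s ≤ degreeIn G W v}

lemma IsMaxTiling.card_heavyVertices_le (h𝒞 : IsMaxTiling (IsEdgeOrBiclique G s t) 𝒞)
    (hst : t < s ∨ s = 1 ∧ t = 1) (hW : W ⊆ uncovered 𝒞) :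
    #(heavyVertices G s t 𝒞 W) ≤ t * 2 ^ #W := by
  by_contra! hlt
  obtain ⟨S, hSW, hfiber⟩ := exists_lt_card_fiber_of_mul_lt_card_of_maps_to
    (s := heavyVertices G s t 𝒞 W) (t := W.powerset) (f := fun v => {u ∈ W | G.Adj v u}) (n := t)
    (fun v _ => mem_powerset.2 (filter_subset _ _)) (by rwa [card_powerset, mul_comm])
  have hmem : ∀ x ∈ {v ∈ heavyVertices G s t 𝒞 W | {u ∈ W | G.Adj v u} = S},
      (∃ c ∈ 𝒞, x ∈ c ∧ #c ≠ s + t) ∧ s ≤ #S ∧ {u ∈ W | G.Adj x u} = S := by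
    intro x hx
    simp only [heavyVertices, mem_filter, mem_univ, true_and] at hx
    exact ⟨hx.1.1, hx.2 ▸ hx.1.2, hx.2⟩
  have hpair : ∀ c ∈ 𝒞, #c ≠ s + t → #c = 2 := fun c hc => (h𝒞.isPiece c hc).card_eq_two
  obtain ⟨x₀, hx₀⟩ := card_pos.1 (Nat.zero_lt_of_lt hfiber)
  obtain ⟨⟨c₀, hc₀, -, hcard₀⟩, hSs, -⟩ := hmem x₀ hx₀
  have hts : t < s := hst.resolve_right fun h => by
    have := hpair c₀ hc₀ hcard₀
    omega
  refine hfiber.not_gt (h𝒞.card_lt_of_isCompleteBetween hts (fun x hx => ?_)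
    ((mem_powerset.1 hSW).trans hW) hSs fun x hx u hu => ?_)
  · obtain ⟨⟨c, hc, hxc, hcard⟩, -⟩ := hmem x hx
    exact ⟨c, hc, hxc, hpair c hc hcard⟩
  · rw [mem_coe, ← (hmem x (mem_coe.1 hx)).2.2] at hu
    exact (mem_filter.1 hu).2

lemma IsMaxTiling.sum_degreeIn_le_of_isCore (h𝒞 : IsMaxTiling (IsEdgeOrBiclique G s t) 𝒞)
    (hs : 1 ≤ s) (hW : W ⊆ uncovered 𝒞) (hc : c ∈ 𝒞) (hA : IsCore G s t W c A) :
    ∑ v ∈ c, degreeIn G W v ≤ t * #W := by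
  rw [← sum_subset hA.subset fun v hv hvA => degreeIn_eq_zero fun u hu =>
    h𝒞.not_adj_of_isCore hs hW hc hA (mem_sdiff.2 ⟨hv, hvA⟩) (mem_union_left _ (hW hu)),
    ← hA.card_eq]
  exact sum_le_card_nsmul _ _ _ fun v _ => degreeIn_le_card W v

lemma sum_degreeIn_le_of_card_ne (hc : c ∈ 𝒞) (hcard : #c ≠ s + t) :
    ∑ v ∈ c, degreeIn G W v ≤ #c * s + #W * #(c ∩ heavyVertices G s t 𝒞 W) := by
  have hpointwise : ∀ v ∈ c,
      degreeIn G W v ≤ s + if v ∈ heavyVertices G s t 𝒞 W then #W else 0 := by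
    intro v hv
    split_ifs with hheavy
    · exact (degreeIn_le_card W v).trans (Nat.le_add_left _ _)
    · by_contra! hlt
      exact hheavy (mem_filter.2 ⟨mem_univ v, ⟨c, hc, hv, hcard⟩, by omega⟩)
  calc ∑ v ∈ c, degreeIn G W v
      ≤ ∑ v ∈ c, (s + if v ∈ heavyVertices G s t 𝒞 W then #W else 0) := sum_le_sum hpointwise
    _ = #c * s + #W * #(c ∩ heavyVertices G s t 𝒞 W) := by
        rw [sum_add_distrib, ← sum_filter, sum_const, sum_const, smul_eq_mul, smul_eq_mul,
          filter_mem_eq_inter, mul_comm #W]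

lemma IsMaxTiling.sum_degreeIn_piece_le (h𝒞 : IsMaxTiling (IsEdgeOrBiclique G s t) 𝒞) (hs : 1 ≤ s)
    (ht : 1 ≤ t) (hW : W ⊆ uncovered 𝒞) (hWcard : 4 * s * (s + t) * 2 ^ (s + t) ≤ #W)
    (hc : c ∈ 𝒞) :
    2 * (s + t) * ∑ v ∈ c, degreeIn G W v + #W * #c ≤ 2 * t * #W * #c +
      (if ∃ A, IsCore G s t W c A then (s + t) * #W else 0) +
      2 * (s + t) * #W * #(c ∩ heavyVertices G s t 𝒞 W) := by
  by_cases hcard : #c = s + t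
  · by_cases hcore : ∃ A, IsCore G s t W c A
    · obtain ⟨A, hA⟩ := id hcore
      have hsum := h𝒞.sum_degreeIn_le_of_isCore hs hW hc hA
      rw [if_pos hcore, hcard]
      refine le_add_right ?_
      linarith [Nat.mul_le_mul_left (2 * (s + t)) hsum]
    · have hsum := two_mul_sum_degreeIn_add_card_le ht hcard hWcard hcore
      rw [if_neg hcore, hcard]
      refine le_add_right ?_
      linarith [Nat.mul_le_mul_left (s + t) hsum]
  · have hsum := sum_degreeIn_le_of_card_ne (G := G) (W := W) hc hcard
    have htwo : #c = 2 := (h𝒞.isPiece c hc).card_eq_two hcard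
    have hlight : 2 * (s + t) * s ≤ #W := by
      have : 1 ≤ 2 ^ (s + t) := Nat.one_le_two_pow
      nlinarith
    have htW : #W ≤ t * #W := Nat.le_mul_of_pos_left _ ht
    rw [htwo] at hsum ⊢
    linarith [Nat.mul_le_mul_left (2 * (s + t)) hsum,
      Nat.zero_le (if ∃ A, IsCore G s t W c A then (s + t) * #W else 0)]

lemma IsMaxTiling.sum_degree_eq (h𝒞 : IsMaxTiling (IsEdgeOrBiclique G s t) 𝒞)
    (hW : W ⊆ uncovered 𝒞) : ∑ u ∈ W, G.degree u = ∑ c ∈ 𝒞, ∑ v ∈ c, degreeIn G W v := by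
  have huncovered : ∑ v ∈ uncovered 𝒞, degreeIn G W v = 0 := sum_eq_zero fun v hv =>
    degreeIn_eq_zero fun u hu => h𝒞.not_adj_of_mem_uncovered hv (hW hu)
  rw [← add_zero (∑ c ∈ 𝒞, _), ← huncovered, h𝒞.sum_biUnion_add_sum_uncovered, sum_degreeIn_comm]
  exact sum_congr rfl fun u _ => (degreeIn_univ u).symm

lemma IsMaxTiling.sum_degree_le (h𝒞 : IsMaxTiling (IsEdgeOrBiclique G s t) 𝒞) (hs : 1 ≤ s)
    (ht : 1 ≤ t) (hW : W ⊆ uncovered 𝒞) (hWcard : 4 * s * (s + t) * 2 ^ (s + t) ≤ #W) :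
    2 * (s + t) * ∑ u ∈ W, G.degree u + #W * Fintype.card V ≤ 2 * t * #W * Fintype.card V +
      (s + t) * #W * #(corePieces G s t 𝒞 W) +
      2 * (s + t) * #W * #(heavyVertices G s t 𝒞 W) := by
  have hcard : ∑ c ∈ 𝒞, #c + #(uncovered 𝒞) = Fintype.card V := by
    simpa using h𝒞.sum_biUnion_add_sum_uncovered 1
  have hpieces := sum_le_sum fun c hc => h𝒞.sum_degreeIn_piece_le hs ht hW hWcard (c := c) hc
  simp only [sum_add_distrib, ← mul_sum, ← sum_filter, sum_const, smul_eq_mul] at hpieces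
  have hheavy := Nat.mul_le_mul_left (2 * (s + t) * #W)
    (h𝒞.sum_card_inter_le (heavyVertices G s t 𝒞 W))
  have hrest : #W * #(uncovered 𝒞) ≤ 2 * t * #W * #(uncovered 𝒞) := by
    gcongr
    exact Nat.le_mul_of_pos_left _ (by omega)
  rw [h𝒞.sum_degree_eq hW, ← hcard, corePieces]
  linarith

end Counting

section Dichotomy

/-- The number of vertices our tilings may leave uncovered. For a set `W`
of this size and a copy `c` of `K_{s,t}` without a core, the edges from `c` to those vertices of `W`
with at least `t` neighbours in `c` number at most `|W| / 2`. -/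
def leftover (s t : ℕ) : ℕ := 4 * s * (s + t) * 2 ^ (s + t)

lemma leftover_le_leftover {s s' t t' : ℕ} (hs : s ≤ s') (ht : t ≤ t') :
    leftover s t ≤ leftover s' t' := by
  unfold leftover
  gcongr
  norm_num

lemma density_le_of_degree_count {s t n w D g x δ : ℝ} (hs : 0 ≤ s) (hst : 0 < s + t) (hw : 0 < w)
    (hlower : w * ((1 - s / (s + t) - δ) * n) ≤ D)
    (hupper : 2 * (s + t) * D + w * n ≤ 2 * t * w * n + (s + t) * w * g + 2 * (s + t) * w * x)
    (hx : x ≤ δ * n) :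
    (s / (s + t) - 4 * s * δ) * n ≤ g * s := by
  have hscaled : 2 * (s + t) * (w * ((1 - s / (s + t) - δ) * n)) =
      w * (2 * t * n - 2 * (s + t) * (δ * n)) := by
    field_simp
    ring
  have hcancel : 2 * t * n - 2 * (s + t) * (δ * n) + n ≤
      2 * t * n + (s + t) * g + 2 * (s + t) * x := by
    refine le_of_mul_le_mul_left ?_ hw
    linarith [mul_le_mul_of_nonneg_left hlower (by positivity : 0 ≤ 2 * (s + t))]
  have hn : n ≤ (s + t) * (g + 4 * (δ * n)) := by
    linarith [mul_le_mul_of_nonneg_left hx hst.le]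
  calc (s / (s + t) - 4 * s * δ) * n = s / (s + t) * n - 4 * s * (δ * n) := by ring
    _ ≤ s / (s + t) * ((s + t) * (g + 4 * (δ * n))) - 4 * s * (δ * n) := by gcongr
    _ = g * s := by field_simp; ring

variable {V : Type*} [Fintype V] [DecidableEq V] (G : SimpleGraph V) [DecidableRel G.Adj] {s t : ℕ}
  {δ : ℝ}

theorem exists_isTiling_or_isIndepSet_of_lt_or_eq_one (ht : 1 ≤ t) (hst : t < s ∨ s = 1 ∧ t = 1)
    (hn : t * 2 ^ leftover s t ≤ δ * Fintype.card V)
    (hdeg : ∀ v, (1 - (s : ℝ) / (s + t) - δ) * Fintype.card V ≤ G.degree v) :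
    (∃ 𝒞, IsTiling (IsEdgeOrBiclique G s t) 𝒞 ∧ #(uncovered 𝒞) ≤ leftover s t) ∨
      ∃ I : Finset V, ((s : ℝ) / (s + t) - 4 * s * δ) * Fintype.card V ≤ #I ∧
        G.IsIndepSet I := by
  obtain ⟨𝒞, h𝒞⟩ := exists_isMaxTiling (IsEdgeOrBiclique G s t)
  refine or_iff_not_imp_left.2 fun hleft => ?_
  have hlarge : leftover s t < #(uncovered 𝒞) := by
    by_contra! hle
    exact hleft ⟨𝒞, h𝒞.toIsTiling, hle⟩
  obtain ⟨W, hW, hWcard⟩ := exists_subset_card_eq hlarge.le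
  have hs : 1 ≤ s := by omega
  have hcores : ∀ c ∈ corePieces G s t 𝒞 W, ∃ A, IsCore G s t W c A := fun c hc =>
    (mem_filter.1 hc).2
  choose! core hcore using hcores
  have hsub : corePieces G s t 𝒞 W ⊆ 𝒞 := filter_subset _ _
  refine ⟨(corePieces G s t 𝒞 W).biUnion fun c => c \ core c, ?_,
    h𝒞.isIndepSet_biUnion_sdiff hs hW hsub hcore⟩
  have hlower : #W * ((1 - (s : ℝ) / (s + t) - δ) * Fintype.card V) ≤
      (∑ u ∈ W, G.degree u : ℕ) := by
    rw [← nsmul_eq_mul, Nat.cast_sum]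
    exact card_nsmul_le_sum _ _ _ fun u _ => hdeg u
  have hheavy : (#(heavyVertices G s t 𝒞 W) : ℝ) ≤ δ * Fintype.card V :=
    le_trans (mod_cast hWcard ▸ h𝒞.card_heavyVertices_le hst hW) hn
  have hWpos : 0 < #W := by
    rw [hWcard, leftover]
    positivity
  rw [h𝒞.card_biUnion_sdiff hsub hcore, Nat.cast_mul]
  exact density_le_of_degree_count (by positivity) (by positivity) (mod_cast hWpos) hlower
    (mod_cast h𝒞.sum_degree_le hs ht hW hWcard.ge) hheavy

theorem exists_isTiling_or_isIndepSet (ht : 1 ≤ t) (hts : t ≤ s)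
    (hn : t * 2 ^ leftover s t ≤ δ * Fintype.card V)
    (hdeg : ∀ v, (1 - (s : ℝ) / (s + t) - δ) * Fintype.card V ≤ G.degree v) :
    (∃ 𝒞, IsTiling (IsEdgeOrBiclique G s t) 𝒞 ∧ #(uncovered 𝒞) ≤ leftover s t) ∨
      ∃ I : Finset V, ((s : ℝ) / (s + t) - 4 * s * δ) * Fintype.card V ≤ #I ∧
        G.IsIndepSet I := by
  rcases hts.lt_or_eq with hlt | rfl
  · exact exists_isTiling_or_isIndepSet_of_lt_or_eq_one G ht (Or.inl hlt) hn hdeg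
  have ht' : (1 : ℝ) ≤ t := mod_cast ht
  have hhalf : (t : ℝ) / (t + t) = (1 : ℕ) / ((1 : ℕ) + (1 : ℕ)) := by
    field_simp
  have hleftover : leftover 1 1 ≤ leftover t t := leftover_le_leftover ht ht
  have hn_one : (1 : ℕ) * 2 ^ leftover 1 1 ≤ δ * Fintype.card V := by
    refine le_trans ?_ hn
    push_cast
    gcongr
    norm_num
  have hδ : 0 ≤ δ * Fintype.card V := le_trans (by positivity) hn_one
  rw [hhalf] at hdeg ⊢
  refine (exists_isTiling_or_isIndepSet_of_lt_or_eq_one G le_rfl (Or.inr ⟨rfl, rfl⟩) hn_one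
    hdeg).imp ?_ ?_
  · rintro ⟨𝒞, h𝒞, hcard⟩
    exact ⟨𝒞, ⟨h𝒞.pairwiseDisjoint, fun c hc => Or.inl (h𝒞.isPiece c hc).isNClique_two⟩,
      hcard.trans hleftover⟩
  · rintro ⟨I, hI, hindep⟩
    refine ⟨I, le_trans ?_ hI, hindep⟩
    push_cast
    nlinarith

end Dichotomy

section Translation

variable {V : Type*} {G : SimpleGraph V}

lemma degR_eq_degree [Fintype V] [DecidableRel G.Adj] (v : V) :
    degR G v = G.degree v := by
  rw [degR, Nat.card_eq_fintype_card, G.card_neighborSet_eq_degree]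

lemma exists_injective_range_eq {ι : Type*} [Fintype ι] {S : Finset V} (hS : Fintype.card ι = #S) :
    ∃ f : ι → V, Function.Injective f ∧ Set.range f = S := by
  let e : ι ≃ S := Fintype.equivOfCardEq (by rw [hS, Fintype.card_coe])
  exact ⟨Subtype.val ∘ e, Subtype.val_injective.comp e.injective, by
    rw [e.surjective.range_comp, Subtype.range_coe]⟩

lemma IsBiclique.exists_Qgraph_hom [DecidableEq V] {s t : ℕ} {c : Finset V}
    (hts : t ≤ s) (hc : IsBiclique G s t c) :
    ∃ f : Qgraph s t →g G, Function.Injective f ∧ Set.range f = (c : Set V) := by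
  obtain ⟨A, S, hA, hS, hAS, rfl⟩ := hc
  obtain ⟨a, ha_inj, ha⟩ := exists_injective_range_eq (ι := Fin t) (S := A) (by simp [hA])
  obtain ⟨b, hb_inj, hb⟩ := exists_injective_range_eq (ι := Fin (s - t) ⊕ Fin t) (S := S)
    (by simp [hS, hts])
  have hadj : ∀ i j, G.Adj (a i) (b j) := fun i j =>
    hAS (ha ▸ Set.mem_range_self i) (hb ▸ Set.mem_range_self j)
  refine ⟨⟨Sum.elim (b ∘ Sum.inl) (Sum.elim a (b ∘ Sum.inr)), ?_⟩, ?_, ?_⟩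
  · intro x y hxy
    obtain ⟨-, (⟨i, j, rfl, rfl⟩ | ⟨j, rfl, rfl⟩) | (⟨i, j, rfl, rfl⟩ | ⟨j, rfl, rfl⟩)⟩ :=
      (SimpleGraph.fromRel_adj _ _ _).1 hxy
    exacts [(hadj _ _).symm, hadj _ _, hadj _ _, (hadj _ _).symm]
  · refine (hb_inj.comp Sum.inl_injective).sumElim
      (ha_inj.sumElim (hb_inj.comp Sum.inr_injective) fun i j => (hadj _ _).ne) ?_
    rintro i (j | j)
    exacts [(hadj _ _).ne', hb_inj.ne Sum.inl_ne_inr]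
  · change Set.range (Sum.elim (b ∘ Sum.inl) (Sum.elim a (b ∘ Sum.inr))) = _
    rw [Set.Sum.elim_range, Set.Sum.elim_range, Set.union_left_comm, ← Set.Sum.elim_range,
      Sum.elim_comp_inl_inr, ha, hb, coe_union]

end Translation

/-- Lemma 7.1: either `G` can be covered, up to at most `C` leftover
vertices, by vertex-disjoint copies of `K₂` and `Q_{s,t}`, or `G` contains an independent
set of size at least `(s/r - γ) n` where `γ = 10srδ` and `r = s + t`. -/
theorem statement11 (s t : ℕ) (ht : 1 ≤ t) (hts : t ≤ s) :
    ∃ C : ℕ, ∃ δ₀ : ℝ, 0 < δ₀ ∧ ∀ δ : ℝ, 0 < δ → δ ≤ δ₀ →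
      ∃ n₀ : ℕ, ∀ n : ℕ, n₀ ≤ n →
        ∀ G : SimpleGraph (Fin n),
          (∀ v, (1 - (s : ℝ) / ((s : ℝ) + (t : ℝ)) - δ) * n ≤ (degR G v : ℝ)) →
          (∃ 𝒞 : Finset (Finset (Fin n)),
            ((𝒞 : Set (Finset (Fin n))).PairwiseDisjoint id) ∧
            (∀ c ∈ 𝒞, G.IsNClique 2 c ∨
              ∃ f : Qgraph s t →g G, Function.Injective f ∧ Set.range f = (c : Set (Fin n))) ∧
            ((Finset.univ \ 𝒞.biUnion id).card ≤ C)) ∨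
          (∃ I : Finset (Fin n),
            ((s : ℝ) / ((s : ℝ) + (t : ℝ)) - 10 * (s : ℝ) * ((s : ℝ) + (t : ℝ)) * δ) * n
              ≤ (I.card : ℝ) ∧
            ∀ x ∈ I, ∀ y ∈ I, ¬ G.Adj x y) := by
  refine ⟨leftover s t, 1, one_pos, fun δ hδ _ => ⟨⌈t * 2 ^ leftover s t / δ⌉₊, ?_⟩⟩
  intro n hn G hdeg
  have hn' : t * 2 ^ leftover s t ≤ δ * Fintype.card (Fin n) := by
    rw [Fintype.card_fin, mul_comm δ, ← div_le_iff₀ hδ]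
    exact Nat.ceil_le.1 hn
  have hdeg' : ∀ v, (1 - (s : ℝ) / (s + t) - δ) * Fintype.card (Fin n) ≤ G.degree v := by
    simpa only [degR_eq_degree, Fintype.card_fin] using hdeg
  refine (exists_isTiling_or_isIndepSet G ht hts hn' hdeg').imp ?_ ?_
  · rintro ⟨𝒞, h𝒞, hcard⟩
    exact ⟨𝒞, h𝒞.pairwiseDisjoint,
      fun c hc => (h𝒞.isPiece c hc).imp_right (IsBiclique.exists_Qgraph_hom hts), hcard⟩
  · rintro ⟨I, hI, hindep⟩
    refine ⟨I, le_trans ?_ hI, fun x hx y hy hxy => hindep hx hy hxy.ne hxy⟩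
    rw [Fintype.card_fin]
    have hfactor : 4 * (s : ℝ) ≤ 10 * s * (s + t) := by
      have ht' : (1 : ℝ) ≤ t := mod_cast ht
      nlinarith [(Nat.cast_nonneg s : (0 : ℝ) ≤ s)]
    gcongr ?_ * _
    gcongr _ - ?_
    exact mul_le_mul_of_nonneg_right hfactor hδ.le
end
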